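/- arXiv:2502.12229 — 2 statements merged into one kernel-verified Lean document; each statement's English description precedes it below -/
import Mathlib

section
/- Let μ be a measure on ℝ with all moments finite and infinite support. Assume: (1) μ is determinate, (2) supp(μ) ⊆ [0,∞), (3) 0 ∈ supp(μ), (4) μ({0}) = 0. Then for every n ∈ ℕ₀, the linear span of the monomial functions {x ↦ x^k : k ≥ n} is dense in L²(μ). -/
open MeasureTheory Polynomial Filter

noncomputable section

/-- A measure on `ℝ` has all moments finite. -/
def HasAllMoments (μ : Measure ℝ) : Prop :=
  ∀ n : ℕ, Integrable (fun x : ℝ => |x| ^ n) μ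

/-- The (topological) support of a measure on `ℝ`: points all of whose
neighborhoods have positive measure. -/
def mSupp (μ : Measure ℝ) : Set ℝ :=
  {x : ℝ | ∀ U ∈ nhds x, μ U ≠ 0}

/-- A measure with all moments finite is determinate if it is the unique measure
with all moments finite having its moment sequence. -/
def IsDeterminate (μ : Measure ℝ) : Prop :=
  ∀ ν : Measure ℝ, HasAllMoments ν →
    (∀ n : ℕ, ∫ x, x ^ n ∂ν = ∫ x, x ^ n ∂μ) → ν = μ

/-- continuous functions of polynomial growth -/
def PG : Submodule ℝ (ℝ → ℝ) where
  carrier := {φ | Continuous φ ∧ ∃ q : ℝ[X], ∀ x, |φ x| ≤ q.eval x}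
  add_mem' := by
    rintro a b ⟨ha, p, hp⟩ ⟨hb, q, hq⟩
    refine ⟨ha.add hb, p + q, fun x => ?_⟩
    rw [eval_add]
    exact (abs_add_le _ _).trans (add_le_add (hp x) (hq x))
  zero_mem' := ⟨continuous_const, 0, fun x => by simp⟩
  smul_mem' := by
    rintro c a ⟨ha, p, hp⟩
    refine ⟨ha.const_smul c, C |c| * p, fun x => ?_⟩
    simp only [Pi.smul_apply, smul_eq_mul, abs_mul, eval_mul, eval_C]
    exact mul_le_mul_of_nonneg_left (hp x) (abs_nonneg _)

lemma PG_poly (p : ℝ[X]) : (fun x => p.eval x) ∈ PG := by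
  refine ⟨p.continuous, 1 + p ^ 2, fun x => ?_⟩
  simp only [eval_add, eval_one, eval_pow]
  rw [abs_le]; constructor <;> nlinarith [sq_nonneg (p.eval x - 1), sq_nonneg (p.eval x + 1), sq_nonneg (p.eval x)]

lemma PG_bdd {f : ℝ → ℝ} (hf : Continuous f) {C₀ : ℝ} (h : ∀ x, |f x| ≤ C₀) : f ∈ PG :=
  ⟨hf, C C₀, fun x => by simpa using h x⟩

lemma poly_integrable {μ : Measure ℝ} (h : HasAllMoments μ) (p : ℝ[X]) :
    Integrable (fun x => p.eval x) μ := by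
  induction p using Polynomial.induction_on' with
  | add p q hp hq => simp only [eval_add]; exact hp.add hq
  | monomial n a =>
    simp only [eval_monomial]
    refine Integrable.const_mul ?_ a
    refine (h n).mono' (by fun_prop) (ae_of_all _ fun x => ?_)
    simp

lemma PG_integrable {μ : Measure ℝ} (h : HasAllMoments μ) (φ : PG) :
    Integrable (φ : ℝ → ℝ) μ := by
  obtain ⟨φ, hc, q, hq⟩ := φ
  exact (poly_integrable h q).mono' hc.aestronglyMeasurable (ae_of_all _ hq)

def chi (R : ℝ) (x : ℝ) : ℝ := max 0 (min 1 (2 - |x| / R))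

lemma chi_cont (R : ℝ) : Continuous (chi R) := by unfold chi; fun_prop
lemma chi_nonneg (R x : ℝ) : 0 ≤ chi R x := le_max_left _ _
lemma chi_le (R x : ℝ) : chi R x ≤ 1 := max_le zero_le_one (min_le_left _ _)
lemma chi_eq {R x : ℝ} (hR : 0 < R) (hx : |x| ≤ R) : chi R x = 1 := by
  have : |x| / R ≤ 1 := (div_le_one hR).2 hx
  unfold chi; rw [min_eq_left (by linarith)]; simp
lemma chi_supp {R : ℝ} (hR : 0 < R) : HasCompactSupport (chi R) := by
  refine HasCompactSupport.intro (isCompact_closedBall (0:ℝ) (2*R)) fun x hx => ?_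
  simp only [Metric.mem_closedBall, dist_zero_right, Real.norm_eq_abs, not_le] at hx
  have : 2 ≤ |x| / R := (le_div_iff₀ hR).2 hx.le
  unfold chi
  rw [max_eq_left]; exact (min_le_right _ _).trans (by linarith)
lemma chi_tail {R : ℝ} (hR : 0 < R) (x : ℝ) : 1 - chi R x ≤ x ^ 2 / R ^ 2 := by
  by_cases hx : |x| ≤ R
  · rw [chi_eq hR hx]; simp; positivity
  · have := chi_nonneg R x
    push Not at hx
    have : 1 ≤ x ^ 2 / R ^ 2 := by
      rw [le_div_iff₀ (by positivity), one_mul]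
      exact sq_le_sq' (by linarith [abs_nonneg x]) hx.le |>.trans_eq (sq_abs x)
    linarith

open CompactlySupported in
lemma repr_measure (g : PG →ₗ[ℝ] ℝ) (hg : ∀ φ : PG, (∀ x, 0 ≤ φ.1 x) → 0 ≤ g φ) :
    ∃ ν : Measure ℝ, HasAllMoments ν ∧ ∀ φ : PG, g φ = ∫ x, φ.1 x ∂ν := by
  have hmono : ∀ φ ψ : PG, (∀ x, φ.1 x ≤ ψ.1 x) → g φ ≤ g ψ := by
    intro φ ψ h
    have := hg (ψ - φ) (fun x => by simpa using h x)
    rw [map_sub] at this; linarith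
  have hmem : ∀ f : C_c(ℝ, ℝ), (f : ℝ → ℝ) ∈ PG := by
    intro f
    obtain ⟨C, hC⟩ := f.hasCompactSupport.exists_bound_of_continuous f.continuous
    exact PG_bdd f.continuous hC
  let Λ₀ : C_c(ℝ, ℝ) →ₗ[ℝ] ℝ :=
    { toFun := fun f => g ⟨f, hmem f⟩
      map_add' := fun a b => by rw [← map_add]; rfl
      map_smul' := fun a b => by rw [← map_smul]; rfl }
  let Λ : C_c(ℝ, ℝ) →ₚ[ℝ] ℝ := PositiveLinearMap.mk₀ Λ₀ (fun f hf => hg _ hf)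
  let ν := RealRMK.rieszMeasure Λ
  have hΛ : ∀ (f : ℝ → ℝ) (h1 : Continuous f) (h2 : HasCompactSupport f) (h3 : f ∈ PG),
      ∫ x, f x ∂ν = g ⟨f, h3⟩ := by
    intro f h1 h2 h3
    exact RealRMK.integral_rieszMeasure Λ ⟨⟨f, h1⟩, h2⟩
  have hcut : ∀ (φ : PG) (R : ℝ), (fun x => φ.1 x * chi R x) ∈ PG := by
    rintro ⟨φ, hc, q, hq⟩ R
    refine ⟨hc.mul (chi_cont R), q, fun x => ?_⟩
    rw [abs_mul, abs_of_nonneg (chi_nonneg R x)]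
    exact (mul_le_of_le_one_right (abs_nonneg _) (chi_le R x)).trans (hq x)
  have hint : ∀ (φ : PG) (R : ℝ), 0 < R → ∫ x, φ.1 x * chi R x ∂ν = g ⟨_, hcut φ R⟩ :=
    fun φ R hR => hΛ _ (φ.2.1.mul (chi_cont R)) ((chi_supp hR).mul_left) _
  have hcpt : IsFiniteMeasureOnCompacts ν := by
    show IsFiniteMeasureOnCompacts (RealRMK.rieszMeasure Λ)
    infer_instance
  have hcutint : ∀ (φ : PG) (R : ℝ), 0 < R → Integrable (fun x => φ.1 x * chi R x) ν :=
    fun φ R hR => (φ.2.1.mul (chi_cont R)).integrable_of_hasCompactSupport (chi_supp hR).mul_left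
  have hpos : ∀ φ : PG, (∀ x, 0 ≤ φ.1 x) → Integrable φ.1 ν := by
    intro φ hφ
    refine (aecover_closedBall (μ := ν) (x := (0:ℝ))
      (r := fun k : ℕ => (k : ℝ) + 1) (l := atTop) ?_).integrable_of_integral_bounded_of_nonneg_ae
      (g φ) (fun k => ?_) (ae_of_all _ hφ) (Eventually.of_forall fun k => ?_)
    · exact tendsto_atTop_add_const_right _ _ tendsto_natCast_atTop_atTop
    · exact φ.2.1.continuousOn.integrableOn_compact (isCompact_closedBall _ _)
    · have hk : (0:ℝ) < k + 1 := by positivity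
      calc ∫ x in Metric.closedBall 0 ((k:ℝ)+1), φ.1 x ∂ν
          = ∫ x in Metric.closedBall 0 ((k:ℝ)+1), φ.1 x * chi (k+1) x ∂ν := by
            refine setIntegral_congr_fun measurableSet_closedBall fun x hx => ?_
            simp only [Metric.mem_closedBall, dist_zero_right, Real.norm_eq_abs] at hx
            simp [chi_eq hk hx]
        _ ≤ ∫ x, φ.1 x * chi (k+1) x ∂ν :=
            setIntegral_le_integral (hcutint φ _ hk)
              (ae_of_all _ fun x => mul_nonneg (hφ x) (chi_nonneg _ _))
        _ = g ⟨_, hcut φ _⟩ := hint φ _ hk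
        _ ≤ g φ := hmono _ _ fun x => mul_le_of_le_one_right (hφ x) (chi_le _ _)
  have hmom : HasAllMoments ν := by
    intro n
    refine hpos ⟨fun x => |x| ^ n, by fun_prop, 1 + X ^ (2 * n), fun x => ?_⟩ fun x => by
      show 0 ≤ |x| ^ n
      positivity
    simp only [abs_pow, abs_abs, eval_add, eval_one, eval_pow, eval_X]
    rw [pow_mul, ← sq_abs, ← pow_mul, mul_comm, pow_mul]
    nlinarith [sq_nonneg (|x| ^ n - 1), sq_nonneg (|x| ^ n)]
  refine ⟨ν, hmom, fun φ => ?_⟩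
  obtain ⟨q, hq⟩ := φ.2.2
  have hlim1 : Tendsto (fun k : ℕ => ∫ x, φ.1 x * chi ((k:ℝ)+1) x ∂ν) atTop (nhds (∫ x, φ.1 x ∂ν)) := by
    refine tendsto_integral_of_dominated_convergence (fun x => q.eval x)
      (fun k => (φ.2.1.mul (chi_cont _)).aestronglyMeasurable) (poly_integrable hmom q)
      (fun k => ae_of_all _ fun x => ?_) (ae_of_all _ fun x => ?_)
    · rw [Real.norm_eq_abs, abs_mul, abs_of_nonneg (chi_nonneg _ x)]
      exact (mul_le_of_le_one_right (abs_nonneg _) (chi_le _ x)).trans (hq x)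
    · refine tendsto_const_nhds.congr' ?_
      obtain ⟨K, hK⟩ := exists_nat_ge |x|
      filter_upwards [eventually_ge_atTop K] with k hk
      have : (K:ℝ) ≤ k := by exact_mod_cast hk
      rw [chi_eq (by positivity) (by linarith), mul_one]
  have hlim2 : Tendsto (fun k : ℕ => ∫ x, φ.1 x * chi ((k:ℝ)+1) x ∂ν) atTop (nhds (g φ)) := by
    let ψ : PG := ⟨_, PG_poly (X ^ 2 * q)⟩
    have hb : ∀ k : ℕ, |g φ - ∫ x, φ.1 x * chi ((k:ℝ)+1) x ∂ν| ≤ (1 / ((k:ℝ)+1)) ^ 2 * g ψ := by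
      intro k
      have hk : (0:ℝ) < k + 1 := by positivity
      rw [hint φ _ hk, ← map_sub, ← smul_eq_mul, ← map_smul, abs_le, ← map_neg]
      have key : ∀ x, |φ.1 x - φ.1 x * chi (k+1) x| ≤ (1 / ((k:ℝ)+1)) ^ 2 * (x ^ 2 * q.eval x) := by
        intro x
        have h1 := chi_tail hk x
        have h2 := chi_le (k+1) x
        have : φ.1 x - φ.1 x * chi (k+1) x = φ.1 x * (1 - chi (k+1) x) := by ring
        rw [this, abs_mul, abs_of_nonneg (sub_nonneg.2 h2)]
        calc _ ≤ q.eval x * (x ^ 2 / ((k:ℝ)+1)^2) :=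
              mul_le_mul (hq x) h1 (sub_nonneg.2 h2) ((abs_nonneg _).trans (hq x))
          _ = _ := by field_simp
      constructor
      · refine hmono _ _ fun x => ?_
        have := (abs_le.1 (key x)).1
        simpa [ψ] using this
      · refine hmono _ _ fun x => ?_
        have := (abs_le.1 (key x)).2
        simpa [ψ] using this
    have h0 : Tendsto (fun k : ℕ => (1 / ((k:ℝ)+1)) ^ 2 * g ψ) atTop (nhds 0) := by
      have := (tendsto_one_div_add_atTop_nhds_zero_nat (𝕜 := ℝ)).pow 2 |>.mul_const (g ψ)
      simpa using this
    have h3 := squeeze_zero_norm (f := fun k : ℕ => g φ - ∫ x, φ.1 x * chi ((k:ℝ)+1) x ∂ν) hb h0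
    have := (tendsto_const_nhds (x := g φ)).sub h3
    simpa using this
  exact tendsto_nhds_unique hlim2 hlim1

lemma det_approx {μ : Measure ℝ} (hmom : HasAllMoments μ) (hdet : IsDeterminate μ)
    {f : ℝ → ℝ} (hf : f ∈ PG) {ε : ℝ} (hε : 0 < ε) :
    ∃ q : ℝ[X], (∀ x, f x ≤ q.eval x) ∧ ∫ x, q.eval x ∂μ < ∫ x, f x ∂μ + ε := by
  let S : PG → Set ℝ := fun φ => {t | ∃ q : ℝ[X], (∀ x, φ.1 x ≤ q.eval x) ∧ t = ∫ x, q.eval x ∂μ}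
  let N : PG → ℝ := fun φ => sInf (S φ)
  have hne : ∀ φ, (S φ).Nonempty := by
    rintro ⟨φ, hc, q, hq⟩
    exact ⟨_, q, fun x => (le_abs_self _).trans (hq x), rfl⟩
  have hlb : ∀ φ : PG, ∀ t ∈ S φ, ∫ x, φ.1 x ∂μ ≤ t := by
    rintro φ t ⟨q, hq, rfl⟩
    exact integral_mono (PG_integrable hmom φ) (poly_integrable hmom q) hq
  have hbd : ∀ φ, BddBelow (S φ) := fun φ => ⟨_, hlb φ⟩
  have hNle : ∀ (φ : PG) (q : ℝ[X]), (∀ x, φ.1 x ≤ q.eval x) → N φ ≤ ∫ x, q.eval x ∂μ :=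
    fun φ q h => csInf_le (hbd φ) ⟨q, h, rfl⟩
  have hhom' : ∀ c : ℝ, 0 < c → ∀ φ, N (c • φ) ≤ c * N φ := by
    intro c hc φ
    rw [← div_le_iff₀' hc]
    refine le_csInf (hne φ) ?_
    rintro t ⟨q, hq, rfl⟩
    rw [div_le_iff₀' hc]
    refine (hNle (c • φ) (C c * q) fun x => ?_).trans_eq ?_
    · simpa using mul_le_mul_of_nonneg_left (hq x) hc.le
    · simp [integral_const_mul]
  have hhom : ∀ c : ℝ, 0 < c → ∀ φ, N (c • φ) = c * N φ := by
    intro c hc φ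
    refine le_antisymm (hhom' c hc φ) ?_
    have := hhom' c⁻¹ (inv_pos.2 hc) (c • φ)
    rw [smul_smul, inv_mul_cancel₀ hc.ne', one_smul] at this
    rwa [← div_eq_inv_mul, le_div_iff₀' hc] at this
  have hadd : ∀ φ ψ, N (φ + ψ) ≤ N φ + N ψ := by
    intro φ ψ
    refine le_of_forall_pos_lt_add fun δ hδ => ?_
    obtain ⟨_, ⟨p, hp, rfl⟩, hp'⟩ := exists_lt_of_csInf_lt (hne φ) (show sInf (S φ) < N φ + δ/2 by
      show N φ < _; linarith)
    obtain ⟨_, ⟨q, hq, rfl⟩, hq'⟩ := exists_lt_of_csInf_lt (hne ψ) (show sInf (S ψ) < N ψ + δ/2 by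
      show N ψ < _; linarith)
    have := hNle (φ + ψ) (p + q) (fun x => by simpa using add_le_add (hp x) (hq x))
    simp only [eval_add] at this
    rw [integral_add (poly_integrable hmom p) (poly_integrable hmom q)] at this
    linarith
  have hN0 : N 0 = 0 := by
    have := hhom 2 (by norm_num) 0
    rw [smul_zero] at this; linarith
  let F : PG := ⟨f, hf⟩
  have hmain : ∃ g : PG →ₗ[ℝ] ℝ, g F = N F ∧ ∀ φ, g φ ≤ N φ := by
    let L : PG →ₗ.[ℝ] ℝ := LinearPMap.mkSpanSingleton' F (N F) (by
      intro c hc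
      rcases smul_eq_zero.1 hc with h | h
      · simp [h]
      · simp [h, hN0])
    obtain ⟨g, hg1, hg2⟩ := exists_extension_of_le_sublinear L N hhom hadd (by
      rintro ⟨y, hy⟩
      obtain ⟨c, rfl⟩ := Submodule.mem_span_singleton.1 hy
      show LinearPMap.mkSpanSingleton' F (N F) _ ⟨c • F, _⟩ ≤ N (c • F)
      rw [LinearPMap.mkSpanSingleton'_apply]
      simp only [RingHom.id_apply, smul_eq_mul]
      rcases lt_trichotomy c 0 with h | h | h
      · have h1 := hadd (c • F) ((-c) • F)
        rw [← add_smul, add_neg_cancel, zero_smul, hN0, hhom (-c) (by linarith)] at h1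
        linarith
      · simp [h, hN0]
      · rw [hhom c h])
    refine ⟨g, ?_, hg2⟩
    have := hg1 ⟨F, Submodule.mem_span_singleton_self F⟩
    rw [show g F = _ from this]
    exact LinearPMap.mkSpanSingleton'_apply_self _ _ _ _
  obtain ⟨g, hgF, hgN⟩ := hmain
  have hgpoly : ∀ p : ℝ[X], g ⟨_, PG_poly p⟩ = ∫ x, p.eval x ∂μ := by
    intro p
    refine le_antisymm ((hgN _).trans (hNle _ p fun x => le_rfl)) ?_
    have := (hgN (-⟨_, PG_poly p⟩)).trans (hNle _ (-p) fun x => by simp)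
    rw [map_neg] at this
    simp only [eval_neg, integral_neg] at this
    linarith
  obtain ⟨ν, hν, hgν⟩ := repr_measure g (by
    intro φ hφ
    have := (hgN (-φ)).trans (hNle _ 0 fun x => by simpa using hφ x)
    rw [map_neg] at this
    simp only [eval_zero, integral_zero] at this
    linarith)
  have hνμ : ν = μ := by
    refine hdet ν hν fun n => ?_
    have h1 := hgpoly (X ^ n)
    rw [hgν] at h1
    simpa using h1
  subst hνμ
  have h1 : N F < ∫ x, f x ∂ν + ε := by
    rw [← hgF, hgν]
    show ∫ x, f x ∂ν < _
    linarith
  obtain ⟨_, ⟨q, hq, rfl⟩, hlt⟩ := exists_lt_of_csInf_lt (hne F) h1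
  exact ⟨q, hq, hlt⟩

lemma nonneg_isSumSq (n : ℕ) : ∀ s : ℝ[X], s.natDegree ≤ n → (∀ x, 0 ≤ s.eval x) → IsSumSq s := by
  induction n using Nat.strong_induction_on with
  | _ n ih =>
  intro s hs hpos
  by_cases hd : s.natDegree = 0
  · obtain ⟨c, rfl⟩ := natDegree_eq_zero.1 hd
    have hc : 0 ≤ c := by simpa using hpos 0
    have : (C c : ℝ[X]) = C (Real.sqrt c) * C (Real.sqrt c) + 0 := by
      rw [← C_mul, Real.mul_self_sqrt hc, add_zero]
    rw [this]
    exact IsSumSq.sq_add _ IsSumSq.zero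
  obtain ⟨a, ha⟩ := s.exists_forall_norm_le
  simp only [Real.norm_eq_abs, abs_of_nonneg (hpos _)] at ha
  obtain ⟨t, ht⟩ := X_sub_C_dvd_sub_C_eval (a := a) (p := s)
  have hta : t.eval a = 0 := by
    have h1 : IsLocalMin (fun x => s.eval x) a := Eventually.of_forall ha
    have h2 := h1.deriv_eq_zero
    rw [Polynomial.deriv] at h2
    have h3 : s = (X - C a) * t + C (s.eval a) := by rw [← ht]; ring
    have h4 := congrArg (fun p => p.derivative.eval a) h3
    simp only [derivative_add, derivative_mul, derivative_sub, derivative_X, derivative_C, eval_add, eval_mul,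
      eval_sub, eval_X, eval_C] at h4
    rw [h2] at h4
    simpa using h4.symm
  obtain ⟨u, hu⟩ := dvd_iff_isRoot.2 hta
  have hsu : s = C (s.eval a) + (X - C a) * (X - C a) * u := by
    rw [mul_assoc, ← hu, ← ht]; ring
  have hupos : ∀ x, x ≠ a → 0 ≤ u.eval x := by
    intro x hx
    have h1 := congrArg (fun p => p.eval x) hsu
    simp only [eval_add, eval_mul, eval_sub, eval_X, eval_C] at h1
    have h2 : 0 ≤ (x - a) * (x - a) * u.eval x := by linarith [ha x]
    have h3 : 0 < (x - a) * (x - a) := mul_self_pos.2 (sub_ne_zero.2 hx)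
    exact nonneg_of_mul_nonneg_right h2 h3
  have hupos' : ∀ x, 0 ≤ u.eval x := by
    intro x
    by_cases hx : x = a
    · subst hx
      have : Tendsto (fun y => u.eval y) (nhdsWithin x {x}ᶜ) (nhds (u.eval x)) :=
        u.continuous.continuousAt.tendsto.mono_left nhdsWithin_le_nhds
      exact ge_of_tendsto this (eventually_nhdsWithin_of_forall fun y hy => hupos y hy)
    · exact hupos x hx
  have hu0 : u ≠ 0 := by
    rintro rfl
    rw [mul_zero, add_zero] at hsu
    exact hd (by rw [hsu]; simp)
  have hdeg : u.natDegree < s.natDegree := by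
    have h1 : ((X - C a) * (X - C a) * u).natDegree = 2 + u.natDegree := by
      rw [natDegree_mul (mul_ne_zero (X_sub_C_ne_zero a) (X_sub_C_ne_zero a)) hu0,
        natDegree_mul (X_sub_C_ne_zero a) (X_sub_C_ne_zero a), natDegree_X_sub_C]
    have h2 : (s - C (s.eval a)).natDegree = 2 + u.natDegree := by
      rw [← h1]; congr 1
      nth_rewrite 1 [hsu]; ring
    rw [natDegree_sub_C] at h2
    omega
  have h1 := ih u.natDegree (by omega) u le_rfl hupos'
  have h2 : s = C (Real.sqrt (s.eval a)) * C (Real.sqrt (s.eval a)) + (X - C a) * (X - C a) * u := by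
    rw [← C_mul, Real.mul_self_sqrt (hpos a)]; exact hsu
  rw [h2]
  exact IsSumSq.sq_add _ ((IsSumSq.mul_self _).mul h1)

lemma cs_int {μ : Measure ℝ} {h k : ℝ → ℂ} (hh : MemLp h 2 μ) (hk : MemLp k 2 μ) :
    ‖∫ x, h x * k x ∂μ‖ ^ 2 ≤ (∫ x, ‖h x‖ ^ 2 ∂μ) * ∫ x, ‖k x‖ ^ 2 ∂μ := by
  have h1 := integral_mul_norm_le_Lp_mul_Lq (μ := μ) (f := h) (g := k) (p := 2) (q := 2)
    Real.HolderConjugate.two_two (by simpa using hh) (by simpa using hk)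
  have h2 : ‖∫ x, h x * k x ∂μ‖ ≤ ∫ x, ‖h x‖ * ‖k x‖ ∂μ := by
    refine (norm_integral_le_integral_norm _).trans_eq ?_
    simp
  have hA : 0 ≤ ∫ x, ‖h x‖ ^ 2 ∂μ := integral_nonneg fun x => by positivity
  have hB : 0 ≤ ∫ x, ‖k x‖ ^ 2 ∂μ := integral_nonneg fun x => by positivity
  simp only [Real.rpow_ofNat, ← Real.sqrt_eq_rpow] at h1
  calc _ ≤ (√(∫ x, ‖h x‖ ^ 2 ∂μ) * √(∫ x, ‖k x‖ ^ 2 ∂μ)) ^ 2 := by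
        gcongr; exact h2.trans h1
    _ = _ := by rw [mul_pow, Real.sq_sqrt hA, Real.sq_sqrt hB]

lemma int_mul {𝕜 : Type*} [RCLike 𝕜] {μ : Measure ℝ} {h k : ℝ → 𝕜} (hh : MemLp h 2 μ)
    (hk : MemLp k 2 μ) : Integrable (fun x => h x * k x) μ := hh.integrable_mul hk

lemma poly_memLp {μ : Measure ℝ} (hmom : HasAllMoments μ) (p : ℝ[X]) :
    MemLp (fun x => p.eval x) 2 μ := by
  rw [memLp_two_iff_integrable_sq p.continuous.aestronglyMeasurable]
  exact (poly_integrable hmom (p ^ 2)).congr (ae_of_all _ fun x => by simp)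

lemma cpoly_memLp {μ : Measure ℝ} (hmom : HasAllMoments μ) (p : ℂ[X]) :
    MemLp (fun x : ℝ => p.eval (x : ℂ)) 2 μ := by
  induction p using Polynomial.induction_on' with
  | add p q hp hq => simp only [eval_add]; exact hp.add hq
  | monomial n a =>
    simp only [eval_monomial]
    have := (poly_memLp hmom (X ^ n)).ofReal (K := ℂ) |>.const_mul a
    simpa using this

def Good (μ : Measure ℝ) (h : ℝ → ℂ) : Prop :=
  MemLp h 2 μ ∧ ∀ p : ℂ[X], ∫ x, h x * p.eval (x : ℂ) ∂μ = 0

lemma den_ne {z : ℂ} (hz : z ^ 2 = -1) (x : ℝ) : (x : ℂ) - z ≠ 0 := by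
  intro h
  have : (x : ℂ) = z := sub_eq_zero.1 h
  rw [← this] at hz
  have h2 : x ^ 2 = -1 := by exact_mod_cast hz
  nlinarith [sq_nonneg x]

lemma den_norm {z : ℂ} (hz : z ^ 2 = -1) (x : ℝ) : ‖(x : ℂ) - z‖ ^ 2 = 1 + x ^ 2 := by
  have h : z = Complex.I ∨ z = -Complex.I := by
    rw [← sq_eq_sq_iff_eq_or_eq_neg, hz, Complex.I_sq]
  rw [← Complex.normSq_eq_norm_sq]
  rcases h with rfl | rfl <;> simp [Complex.normSq_apply] <;> ring

lemma MemLp_div {μ : Measure ℝ} {z : ℂ} (hz : z ^ 2 = -1) {h : ℝ → ℂ} (hh : MemLp h 2 μ) :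
    MemLp (fun x => h x / ((x : ℂ) - z)) 2 μ := by
  refine hh.mono ?_ (ae_of_all _ fun x => ?_)
  · have : Continuous fun x : ℝ => ((x : ℂ) - z)⁻¹ :=
      Continuous.inv₀ (by fun_prop) (den_ne hz)
    simp only [div_eq_mul_inv]
    exact hh.1.mul this.aestronglyMeasurable
  · rw [norm_div]
    refine div_le_self (norm_nonneg _) ?_
    have := den_norm hz x
    nlinarith [sq_nonneg x, norm_nonneg ((x : ℂ) - z)]

lemma Good.div {μ : Measure ℝ} (hmom : HasAllMoments μ) (hdet : IsDeterminate μ) {z : ℂ}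
    (hz : z ^ 2 = -1) {h : ℝ → ℂ} (hh : Good μ h) : Good μ (fun x => h x / ((x : ℂ) - z)) := by
  refine ⟨MemLp_div hz hh.1, ?_⟩
  set G : ℂ := ∫ x, h x / ((x : ℂ) - z) ∂μ with hG
  set H : ℝ := ∫ x, ‖h x‖ ^ 2 ∂μ with hH
  have hH0 : 0 ≤ H := integral_nonneg fun x => by positivity
  have hd2 := MemLp_div hz hh.1
  have step1 : ∀ p : ℂ[X], ∫ x, h x / ((x : ℂ) - z) * p.eval (x : ℂ) ∂μ = p.eval z * G := by
    intro p
    obtain ⟨t, ht⟩ := X_sub_C_dvd_sub_C_eval (a := z) (p := p)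
    have h1 : ∀ x : ℝ, h x / ((x : ℂ) - z) * p.eval (x : ℂ) =
        h x * t.eval (x:ℂ) + p.eval z * (h x / ((x : ℂ) - z) ) := by
      intro x
      have h2 := congrArg (fun p => p.eval (x:ℂ)) ht
      simp only [eval_mul, eval_sub, eval_X, eval_C] at h2
      have h3 : p.eval (x:ℂ) = ((x:ℂ) - z) * t.eval (x:ℂ) + p.eval z := by rw [← h2]; ring
      have := den_ne hz x
      rw [h3]; field_simp
    simp_rw [h1]
    rw [integral_add, hh.2 t, zero_add, integral_const_mul]
    · exact int_mul hh.1 (cpoly_memLp hmom t)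
    · refine Integrable.const_mul ?_ _
      have := int_mul hd2 (cpoly_memLp hmom 1)
      simpa only [eval_one, mul_one] using this
  have hsint : ∀ s : ℝ[X], Integrable (fun x => s.eval x / (1 + x ^ 2)) μ := by
    intro s
    refine (poly_integrable hmom s).mono ?_ (ae_of_all _ fun x => ?_)
    · exact (s.continuous.div (by fun_prop) (fun x => by positivity)).aestronglyMeasurable
    · rw [norm_div]
      refine div_le_self (norm_nonneg _) ?_
      rw [Real.norm_eq_abs]
      exact le_trans (by nlinarith [sq_nonneg x]) (le_abs_self _)
  have step3 : ∀ s : ℝ[X], IsSumSq s → ‖(s.map (algebraMap ℝ ℂ)).eval z‖ * ‖G‖ ^ 2 ≤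
      H * ∫ x, s.eval x / (1 + x ^ 2) ∂μ := by
    intro s hs
    induction hs with
    | zero => simp
    | sq_add a hs ih =>
      rename_i s
      have h1 : ‖(a.map (algebraMap ℝ ℂ)).eval z‖ ^ 2 * ‖G‖ ^ 2 ≤
          H * ∫ x, (a * a).eval x / (1 + x ^ 2) ∂μ := by
        rw [← mul_pow, ← norm_mul, ← step1]
        have h2 := cs_int hh.1 (MemLp_div hz (cpoly_memLp hmom (a.map (algebraMap ℝ ℂ))))
        calc _ = ‖∫ x, h x * (eval (↑x) (Polynomial.map (algebraMap ℝ ℂ) a) / (↑x - z)) ∂μ‖ ^ 2 := by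
              congr 2; refine integral_congr_ae (ae_of_all _ fun x => ?_)
              ring
          _ ≤ _ := h2
          _ = _ := by
              congr 1; refine integral_congr_ae (ae_of_all _ fun x => ?_)
              simp only [norm_div, div_pow, den_norm hz, eval_mul]
              rw [← Complex.coe_algebraMap, eval_map_algebraMap, aeval_algebraMap_apply]
              simp [sq]
      simp only [Polynomial.map_add, Polynomial.map_mul, eval_add, eval_mul, add_div] at h1 ⊢
      rw [integral_add (by simpa using hsint (a * a)) (hsint s), mul_add]
      refine le_trans ?_ (add_le_add h1 ih)
      rw [← add_mul]
      gcongr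
      refine (norm_add_le _ _).trans ?_
      rw [norm_mul, sq]
  have hG0 : G = 0 := by
    have hf : (fun x : ℝ => -(1 / (1 + x ^ 2))) ∈ PG := by
      refine PG_bdd (C₀ := 1) ?_ fun x => ?_
      · exact (continuous_const.div (by fun_prop) (fun x => by positivity)).neg
      · rw [abs_neg, abs_of_nonneg (by positivity), div_le_one (by positivity)]
        nlinarith [sq_nonneg x]
    have key : ∀ ε > 0, ‖G‖ ^ 2 ≤ H * ε := by
      intro ε hε
      obtain ⟨q, hq, hlt⟩ := det_approx hmom hdet hf hε
      have hs : ∀ x, 0 ≤ (1 + (1 + X ^ 2) * q : ℝ[X]).eval x := by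
        intro x
        have h1 := hq x
        simp only [eval_add, eval_one, eval_mul, eval_pow, eval_X]
        have h2 : 0 < 1 + x ^ 2 := by positivity
        have h3 := mul_le_mul_of_nonneg_left h1 h2.le
        have : (1 + x ^ 2) * -(1 / (1 + x ^ 2)) = -1 := by field_simp
        linarith
      have h4 := step3 _ (nonneg_isSumSq _ _ le_rfl hs)
      have h5 : (Polynomial.map (algebraMap ℝ ℂ) (1 + (1 + X ^ 2) * q)).eval z = 1 := by
        simp [hz]
      rw [h5, norm_one, one_mul] at h4
      refine h4.trans (mul_le_mul_of_nonneg_left ?_ hH0)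
      have h6 : ∀ x : ℝ, (1 + (1 + X ^ 2) * q : ℝ[X]).eval x / (1 + x ^ 2) =
          q.eval x - (-(1 / (1 + x ^ 2))) := by
        intro x
        have h2 : 1 + x ^ 2 ≠ 0 := by positivity
        simp only [eval_add, eval_one, eval_mul, eval_pow, eval_X]
        field_simp; ring
      simp_rw [h6]
      rw [integral_sub (poly_integrable hmom q) (PG_integrable hmom ⟨_, hf⟩)]
      linarith
    have h0 : ‖G‖ ^ 2 ≤ 0 := by
      refine le_of_forall_pos_le_add fun δ hδ => ?_
      refine (key (δ / (H + 1)) (by positivity)).trans ?_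
      rw [zero_add, mul_div_assoc', div_le_iff₀ (by positivity)]
      nlinarith
    have : ‖G‖ = 0 := by
      have := sq_nonneg ‖G‖
      exact pow_eq_zero_iff (two_ne_zero) |>.1 (le_antisymm h0 this)
    simpa using this
  intro p
  rw [step1, hG0, mul_zero]

open BoundedContinuousFunction in
lemma Good.zero {μ : Measure ℝ} (hmom : HasAllMoments μ) (hdet : IsDeterminate μ)
    {h : ℝ → ℝ} (hh : Good μ (fun x => (h x : ℂ))) : h =ᵐ[μ] 0 := by
  have hfin : IsFiniteMeasure μ := by
    have := hmom 0
    simp only [pow_zero] at this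
    rw [integrable_const_iff] at this
    simpa using this
  let A : StarSubalgebra ℂ (ℝ →ᵇ ℂ) :=
    { carrier := {a | ∀ k, Good μ k → Good μ (fun x => k x * a x) ∧ Good μ (fun x => k x * star (a x))}
      mul_mem' := by
        intro a b ha hb k hk
        constructor
        · have := (hb _ (ha k hk).1).1
          simpa [mul_assoc] using this
        · have := (hb _ (ha k hk).2).2
          simpa [mul_assoc] using this
      add_mem' := by
        have add : ∀ k l, Good μ k → Good μ l → Good μ (fun x => k x + l x) := by
          intro k l hk hl
          refine ⟨hk.1.add hl.1, fun p => ?_⟩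
          simp only [add_mul]
          rw [integral_add (int_mul hk.1 (cpoly_memLp hmom p))
            (int_mul hl.1 (cpoly_memLp hmom p)), hk.2, hl.2, add_zero]
        intro a b ha hb k hk
        constructor
        · have := add _ _ (ha k hk).1 (hb k hk).1
          simpa [mul_add] using this
        · have := add _ _ (ha k hk).2 (hb k hk).2
          simpa [mul_add] using this
      algebraMap_mem' := by
        have sm : ∀ (c : ℂ) k, Good μ k → Good μ (fun x => k x * c) := by
          intro c k hk
          refine ⟨hk.1.mul_const c, fun p => ?_⟩
          have : ∀ x : ℝ, k x * c * p.eval (x:ℂ) = c * (k x * p.eval (x:ℂ)) := fun x => by ring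
          simp_rw [this]
          rw [integral_const_mul, hk.2, mul_zero]
        intro c k hk
        exact ⟨by simpa using sm c k hk, by simpa using sm (star c) k hk⟩
      star_mem' := by
        intro a ha k hk
        refine ⟨?_, ?_⟩
        · simpa using (ha k hk).2
        · simpa using (ha k hk).1 }
  have hI : (Complex.I) ^ 2 = -1 := Complex.I_sq
  have hI' : (-Complex.I) ^ 2 = -1 := by rw [neg_sq]; exact hI
  let b : ℝ →ᵇ ℂ := BoundedContinuousFunction.ofNormedAddCommGroup
    (fun x : ℝ => ((x:ℂ) - Complex.I)⁻¹) (Continuous.inv₀ (by fun_prop) (den_ne hI)) 1 (by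
      intro x
      rw [norm_inv]
      refine inv_le_one_of_one_le₀ ?_
      have := den_norm hI x
      nlinarith [sq_nonneg x, norm_nonneg ((x : ℂ) - Complex.I)])
  have hb : b ∈ A := by
    intro k hk
    refine ⟨by simpa [b, div_eq_mul_inv] using hk.div hmom hdet hI, ?_⟩
    have := hk.div hmom hdet hI'
    simpa [b, div_eq_mul_inv] using this
  have hsep : (A.map (toContinuousMapStarₐ ℂ)).SeparatesPoints := by
    intro x y hxy
    refine ⟨b, ⟨toContinuousMapStarₐ ℂ b, ⟨b, hb, rfl⟩, rfl⟩, ?_⟩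
    intro h
    apply hxy
    have h' : ((x:ℂ) - Complex.I)⁻¹ = ((y:ℂ) - Complex.I)⁻¹ := h
    have := sub_left_injective (inv_injective h')
    exact_mod_cast this
  have hhr : MemLp h 2 μ := by
    have := hh.1.re
    simpa using this
  have hhi : Integrable h μ := hhr.integrable (by norm_num)
  let P := μ.withDensity (fun x => ENNReal.ofReal (h x))
  let P' := μ.withDensity (fun x => ENNReal.ofReal (-h x))
  have hP : IsFiniteMeasure P := isFiniteMeasure_withDensity_ofReal hhi.2
  have hP' : IsFiniteMeasure P' := isFiniteMeasure_withDensity_ofReal hhi.neg.2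
  have hmeas1 : AEMeasurable (fun x => ENNReal.ofReal (h x)) μ := hhr.1.aemeasurable.ennreal_ofReal
  have hmeas2 : AEMeasurable (fun x => ENNReal.ofReal (-h x)) μ :=
    hhr.1.aemeasurable.neg.ennreal_ofReal
  have heq : P = P' := by
    refine ext_of_forall_mem_subalgebra_integral_eq_of_polish (𝕜 := ℂ) hsep fun g hg => ?_
    have h1 := (hg _ hh).1.2 1
    simp only [eval_one, mul_one] at h1
    show ∫ x, g x ∂(μ.withDensity _) = ∫ x, g x ∂(μ.withDensity _)
    rw [integral_withDensity_eq_integral_toReal_smul₀ hmeas1 (by simp),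
      integral_withDensity_eq_integral_toReal_smul₀ hmeas2 (by simp), ← sub_eq_zero]
    have hgm : AEStronglyMeasurable (fun x => g x) μ := g.continuous.aestronglyMeasurable
    have hi : ∀ k : ℝ → ℝ, Integrable k μ → Integrable (fun x => (ENNReal.ofReal (k x)).toReal • g x) μ := by
      intro k hk
      have hk' : Integrable (fun x => (ENNReal.ofReal (k x)).toReal) μ := by
        have := hk.real_toNNReal
        exact this
      exact hk'.smul_bdd _ hgm (ae_of_all _ fun x => g.norm_coe_le_norm x)
    rw [← integral_sub (hi h hhi) (hi (fun x => -h x) hhi.neg), ← h1]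
    refine integral_congr_ae (ae_of_all _ fun x => ?_)
    simp only [ENNReal.toReal_ofReal', Complex.real_smul]
    rcases le_total 0 (h x) with h | h
    · rw [max_eq_left h, max_eq_right (by linarith)]; simp
    · rw [max_eq_right h, max_eq_left (by linarith)]; simp
  have h2 := (withDensity_eq_iff hmeas1 hmeas2 (by
    have := hP.measure_univ_lt_top
    simp only [P, withDensity_apply _ MeasurableSet.univ, Measure.restrict_univ] at this
    exact this.ne)).1 heq
  filter_upwards [h2] with x hx
  rcases lt_trichotomy 0 (h x) with h | h | h
  · rw [ENNReal.ofReal_of_nonpos (show -_ ≤ 0 by linarith), ENNReal.ofReal_eq_zero] at hx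
    linarith
  · exact h.symm
  · rw [ENNReal.ofReal_of_nonpos h.le] at hx
    have := ENNReal.ofReal_eq_zero.1 hx.symm
    linarith

/-- completeness of `x^n ℝ[x]` -/
def Cplt (μ : Measure ℝ) (n : ℕ) : Prop :=
  ∀ h : ℝ → ℝ, MemLp h 2 μ → (∀ p : ℝ[X], ∫ x, h x * (X ^ n * p).eval x ∂μ = 0) → h =ᵐ[μ] 0

lemma cplt_zero {μ : Measure ℝ} (hmom : HasAllMoments μ) (hdet : IsDeterminate μ) : Cplt μ 0 := by
  intro h hh horth
  have hhc : MemLp (fun x => (h x : ℂ)) 2 μ := hh.ofReal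
  refine Good.zero hmom hdet ⟨hhc, fun p => ?_⟩
  induction p using Polynomial.induction_on' with
  | add p q hp hq =>
    simp only [eval_add, mul_add]
    rw [integral_add (int_mul hhc (cpoly_memLp hmom p))
      (int_mul hhc (cpoly_memLp hmom q)), hp, hq, add_zero]
  | monomial n a =>
    have h1 := horth (X ^ n)
    simp only [pow_zero, one_mul, eval_pow, eval_X] at h1
    have h2 : ∀ x : ℝ, (h x : ℂ) * (monomial n a).eval (x:ℂ) = a * ((h x * x ^ n : ℝ) : ℂ) := by
      intro x; simp; ring
    simp_rw [h2]
    rw [integral_const_mul, integral_complex_ofReal, h1]; simp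

lemma cplt_one {μ : Measure ℝ} (hmom : HasAllMoments μ) (hdet : IsDeterminate μ)
    (hmass : μ {0} = 0) : Cplt μ 1 := by
  intro h hh horth
  refine cplt_zero hmom hdet h hh ?_
  set c := ∫ x, h x ∂μ with hc
  have hhi : Integrable h μ := by
    have := int_mul hh (poly_memLp hmom 1)
    simpa only [eval_one, mul_one] using this
  have h1 : ∀ p : ℝ[X], ∫ x, h x * p.eval x ∂μ = p.eval 0 * c := by
    intro p
    have h2 : ∀ x, h x * p.eval x = h x * (X ^ 1 * p.divX).eval x + p.eval 0 * h x := by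
      intro x
      have h3 := congrArg (fun q => q.eval x) p.divX_mul_X_add
      simp only [eval_add, eval_mul, eval_X, eval_C, coeff_zero_eq_eval_zero] at h3
      rw [← h3]
      simp; ring
    simp_rw [h2]
    rw [integral_add (int_mul hh (poly_memLp hmom _)) (hhi.const_mul _), horth,
      integral_const_mul, zero_add]
  suffices hc0 : c = 0 by
    intro p; rw [h1, hc0, mul_zero]
  set H : ℝ := ∫ x, ‖(h x : ℂ)‖ ^ 2 ∂μ with hH
  have hH0 : 0 ≤ H := integral_nonneg fun x => by positivity
  have step3 : ∀ s : ℝ[X], IsSumSq s → s.eval 0 * c ^ 2 ≤ H * ∫ x, s.eval x ∂μ := by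
    intro s hs
    induction hs with
    | zero => simp
    | sq_add a hs ih =>
      rename_i s
      have h2 := cs_int hh.ofReal (poly_memLp hmom a).ofReal
      have h3 : ∫ x, (h x : ℂ) * ((a.eval x : ℝ) : ℂ) ∂μ = ((a.eval 0 * c : ℝ) : ℂ) := by
        rw [← h1, ← integral_complex_ofReal]; simp
      have h4 : ∫ x, ‖((a.eval x : ℝ) : ℂ)‖ ^ 2 ∂μ = ∫ x, (a * a).eval x ∂μ := by
        congr 1; ext x; simp [sq]
      have h5 : ‖((a.eval 0 * c : ℝ) : ℂ)‖ ^ 2 = (a * a).eval 0 * c ^ 2 := by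
        rw [Complex.norm_real, Real.norm_eq_abs, sq_abs, eval_mul]; ring
      change ‖∫ x, (h x : ℂ) * ((a.eval x : ℝ) : ℂ) ∂μ‖ ^ 2 ≤ H * ∫ x, ‖((a.eval x : ℝ) : ℂ)‖ ^ 2 ∂μ at h2
      rw [h3, h4, h5] at h2
      rw [eval_add, add_mul]
      simp_rw [eval_add (p := a * a)]
      rw [integral_add (poly_integrable hmom _) (poly_integrable hmom _), mul_add]
      exact add_le_add h2 ih
  let f : ℕ → ℝ → ℝ := fun k x => max 0 (1 - k * |x|)
  have hfc : ∀ k, Continuous (f k) := fun k => by fun_prop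
  have hf1 : ∀ k x, |f k x| ≤ 1 := by
    intro k x
    rw [abs_of_nonneg (le_max_left _ _)]
    exact max_le zero_le_one (by have : 0 ≤ k * |x| := by positivity
                                 linarith)
  have hlim : Tendsto (fun k => ∫ x, f k x ∂μ) atTop (nhds (∫ x, (0:ℝ) ∂μ)) := by
    refine tendsto_integral_of_dominated_convergence (fun x => (1 : ℝ))
      (fun k => (hfc k).aestronglyMeasurable) (by simpa using poly_integrable hmom 1)
      (fun k => ae_of_all _ (hf1 k)) ?_
    have : ∀ᵐ x ∂μ, x ≠ 0 := by
      rw [ae_iff]; simpa using hmass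
    filter_upwards [this] with x hx
    refine tendsto_const_nhds.congr' ?_
    obtain ⟨K, hK⟩ := exists_nat_ge (1 / |x|)
    filter_upwards [eventually_ge_atTop K] with k hk
    have hx' : 0 < |x| := abs_pos.2 hx
    have : (K:ℝ) ≤ k := by exact_mod_cast hk
    have h6 : 1 ≤ k * |x| := by
      rw [← div_le_iff₀ hx']; linarith
    simp only [f]
    rw [max_eq_left (by linarith)]
  rw [integral_zero] at hlim
  have key : ∀ k : ℕ, c ^ 2 ≤ H * (∫ x, f k x ∂μ + 1 / ((k:ℝ) + 1)) := by
    intro k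
    obtain ⟨q, hq, hlt⟩ := det_approx hmom hdet (PG_bdd (hfc k) (hf1 k))
      (show (0:ℝ) < 1 / ((k:ℝ) + 1) by positivity)
    have h7 := step3 q (nonneg_isSumSq _ q le_rfl fun x => (le_max_left _ _).trans (hq x))
    have h8 : 1 ≤ q.eval 0 := by
      have := hq 0
      simpa [f] using this
    calc c ^ 2 ≤ q.eval 0 * c ^ 2 := le_mul_of_one_le_left (sq_nonneg _) h8
      _ ≤ _ := h7
      _ ≤ _ := mul_le_mul_of_nonneg_left hlt.le hH0
  have hl2 := (hlim.add (tendsto_one_div_add_atTop_nhds_zero_nat (𝕜 := ℝ))).const_mul H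
  have := ge_of_tendsto' hl2 key
  rw [add_zero, mul_zero] at this
  exact pow_eq_zero_iff (two_ne_zero) |>.1 (le_antisymm this (sq_nonneg c))

lemma on_norm_sq {E : Type*} [NormedAddCommGroup E] [InnerProductSpace ℝ E] {e : ℕ → E}
    (he : Orthonormal ℝ e) (s : Finset ℕ) (c : ℕ → ℝ) :
    ‖∑ k ∈ s, c k • e k‖ ^ 2 = ∑ k ∈ s, c k ^ 2 := by
  rw [← real_inner_self_eq_norm_sq, he.inner_sum]
  simp [sq]

lemma on_bessel {V E : Type*} [AddCommGroup V] [Module ℝ V] [NormedAddCommGroup E]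
    [InnerProductSpace ℝ E] (J : V →ₗ[ℝ] E) (P : ℕ → V) (hP : Orthonormal ℝ (fun k => J (P k)))
    (φ : V →ₗ[ℝ] ℝ) {A : ℝ} (hφ : ∀ p, |φ p| ≤ A * ‖J p‖) (s : Finset ℕ) :
    ∑ k ∈ s, φ (P k) ^ 2 ≤ A ^ 2 := by
  set S := ∑ k ∈ s, φ (P k) ^ 2 with hS
  have hS0 : 0 ≤ S := Finset.sum_nonneg fun _ _ => sq_nonneg _
  have h1 := hφ (∑ k ∈ s, φ (P k) • P k)
  have h2 : φ (∑ k ∈ s, φ (P k) • P k) = S := by simp [hS, sq]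
  have h3 : ‖J (∑ k ∈ s, φ (P k) • P k)‖ ^ 2 = S := by
    rw [map_sum]; simp_rw [map_smul]
    exact on_norm_sq hP s _
  rw [h2, abs_of_nonneg hS0] at h1
  have h4 : S ^ 2 ≤ A ^ 2 * S := by
    calc S ^ 2 ≤ (A * ‖J (∑ k ∈ s, φ (P k) • P k)‖) ^ 2 := pow_le_pow_left₀ hS0 h1 2
      _ = _ := by rw [mul_pow, h3]
  rcases hS0.eq_or_lt with h | h
  · rw [← h]; positivity
  · rw [sq S] at h4
    exact le_of_mul_le_mul_right h4 h

lemma tri_bound {V E : Type*} [AddCommGroup V] [Module ℝ V] [NormedAddCommGroup E]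
    [InnerProductSpace ℝ E] (J : V →ₗ[ℝ] E) (R : V →ₗ[ℝ] V) (P : ℕ → V)
    (hP : Orthonormal ℝ (fun k => J (P k)))
    (ev Λ : V →ₗ[ℝ] ℝ) {A B : ℝ} (hA : 0 ≤ A) (hB : 0 ≤ B)
    (hev : ∀ p, |ev p| ≤ A * ‖J p‖) (hΛ : ∀ p, |Λ p| ≤ B * ‖J p‖)
    (hR : ∀ n, R (P n) ∈ Submodule.span ℝ (P '' Set.Iio n))
    (hRk : ∀ n k, k < n → inner ℝ (J (P k)) (J (R (P n))) = Λ (P n) * ev (P k) - ev (P n) * Λ (P k)) :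
    ∀ p ∈ Submodule.span ℝ (Set.range P), ‖J (R p)‖ ≤ 2 * A * B * ‖J p‖ := by
  have h1 : ∀ n, ‖J (R (P n))‖ ^ 2 ≤ 2 * A ^ 2 * Λ (P n) ^ 2 + 2 * B ^ 2 * ev (P n) ^ 2 := by
    intro n
    have h2 := hR n
    rw [← Finset.coe_range, Submodule.mem_span_image_finset_iff_exists_fun'] at h2
    obtain ⟨c, hc⟩ := h2
    have h3 : J (R (P n)) = ∑ k ∈ Finset.range n, c k • J (P k) := by
      rw [← hc, map_sum]; simp_rw [map_smul]
    have h4 : ∀ k ∈ Finset.range n, c k = Λ (P n) * ev (P k) - ev (P n) * Λ (P k) := by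
      intro k hk
      rw [← hRk n k (Finset.mem_range.1 hk), h3]
      exact (hP.inner_right_sum c hk).symm
    rw [h3, on_norm_sq hP]
    calc ∑ k ∈ Finset.range n, c k ^ 2
        ≤ ∑ k ∈ Finset.range n, (2 * Λ (P n) ^ 2 * ev (P k) ^ 2 + 2 * ev (P n) ^ 2 * Λ (P k) ^ 2) := by
          refine Finset.sum_le_sum fun k hk => ?_
          rw [h4 k hk]
          nlinarith [sq_nonneg (Λ (P n) * ev (P k) + ev (P n) * Λ (P k))]
      _ = 2 * Λ (P n) ^ 2 * ∑ k ∈ Finset.range n, ev (P k) ^ 2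
          + 2 * ev (P n) ^ 2 * ∑ k ∈ Finset.range n, Λ (P k) ^ 2 := by
          rw [Finset.sum_add_distrib, Finset.mul_sum, Finset.mul_sum]
      _ ≤ 2 * Λ (P n) ^ 2 * A ^ 2 + 2 * ev (P n) ^ 2 * B ^ 2 := by
          gcongr
          · exact on_bessel J P hP ev hev _
          · exact on_bessel J P hP Λ hΛ _
      _ = _ := by ring
  intro p hp
  obtain ⟨c, rfl⟩ := (Finsupp.mem_span_range_iff_exists_finsupp).1 hp
  set s := c.support
  have h5 : ‖J (c.sum fun i a => a • P i)‖ ^ 2 = ∑ k ∈ s, c k ^ 2 := by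
    rw [Finsupp.sum, map_sum]; simp_rw [map_smul]
    exact on_norm_sq hP s _
  have h6 : ‖J (R (c.sum fun i a => a • P i))‖ ≤ ∑ k ∈ s, |c k| * ‖J (R (P k))‖ := by
    rw [Finsupp.sum, map_sum, map_sum]; simp_rw [map_smul]
    refine (norm_sum_le _ _).trans_eq ?_
    simp [norm_smul, s]
  refine abs_le_of_sq_le_sq' ?_ (by positivity) |>.2
  calc _ ≤ (∑ k ∈ s, |c k| * ‖J (R (P k))‖) ^ 2 := pow_le_pow_left₀ (norm_nonneg _) h6 2
    _ ≤ (∑ k ∈ s, |c k| ^ 2) * ∑ k ∈ s, ‖J (R (P k))‖ ^ 2 := Finset.sum_mul_sq_le_sq_mul_sq _ _ _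
    _ ≤ (∑ k ∈ s, |c k| ^ 2) * (4 * A ^ 2 * B ^ 2) := by
        gcongr
        calc _ ≤ ∑ k ∈ s, (2 * A ^ 2 * Λ (P k) ^ 2 + 2 * B ^ 2 * ev (P k) ^ 2) :=
              Finset.sum_le_sum fun k _ => h1 k
          _ = 2 * A ^ 2 * ∑ k ∈ s, Λ (P k) ^ 2 + 2 * B ^ 2 * ∑ k ∈ s, ev (P k) ^ 2 := by
              rw [Finset.sum_add_distrib, Finset.mul_sum, Finset.mul_sum]
          _ ≤ 2 * A ^ 2 * B ^ 2 + 2 * B ^ 2 * A ^ 2 := by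
              gcongr
              · exact on_bessel J P hP Λ hΛ _
              · exact on_bessel J P hP ev hev _
          _ = _ := by ring
    _ = _ := by
        simp_rw [sq_abs]; rw [← h5]; ring

def dX : ℝ[X] →ₗ[ℝ] ℝ[X] where
  toFun := divX
  map_add' := fun p q => divX_add
  map_smul' := fun c p => by ext n; simp [coeff_divX]

lemma dX_span (n : ℕ) (p : ℝ[X]) (hp : p ∈ Submodule.span ℝ ((fun k => (X : ℝ[X]) ^ k) '' Set.Iic n)) :
    dX p ∈ Submodule.span ℝ ((fun k => (X : ℝ[X]) ^ k) '' Set.Iio n) := by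
  induction hp using Submodule.span_induction with
  | mem x h =>
    obtain ⟨k, hk, rfl⟩ := h
    cases k with
    | zero =>
      have : dX ((fun k => (X : ℝ[X]) ^ k) 0) = 0 := by simp [dX]
      rw [this]; exact zero_mem _
    | succ k =>
      have : dX ((fun k => (X : ℝ[X]) ^ k) (k+1)) = X ^ k := by
        simp only [dX, LinearMap.coe_mk, AddHom.coe_mk]
        ext j; simp [coeff_divX, coeff_X_pow]
      rw [this]
      exact Submodule.subset_span ⟨k, Nat.lt_of_succ_le hk, rfl⟩
  | zero => simp
  | add x y _ _ hx hy => rw [map_add]; exact add_mem hx hy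
  | smul a x _ hx => rw [map_smul]; exact Submodule.smul_mem _ _ hx

lemma dX_eq (p : ℝ[X]) : p = X * dX p + C (p.eval 0) := by
  have := p.divX_mul_X_add
  rw [coeff_zero_eq_eval_zero, mul_comm] at this
  exact this.symm

lemma ortho_polys {E : Type*} [NormedAddCommGroup E] [InnerProductSpace ℝ E]
    (J : ℝ[X] →ₗ[ℝ] E) (hJ : Function.Injective J) :
    ∃ P : ℕ → ℝ[X], Orthonormal ℝ (fun k => J (P k)) ∧
      (∀ n, P n ∈ Submodule.span ℝ ((fun k => (X : ℝ[X]) ^ k) '' Set.Iic n)) ∧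
      (∀ n, Submodule.span ℝ ((fun k => (X : ℝ[X]) ^ k) '' Set.Iio n) ≤ Submodule.span ℝ (P '' Set.Iio n)) ∧
      Submodule.span ℝ (Set.range P) = ⊤ := by
  let v : ℕ → E := fun k => J (X ^ k)
  have hv : LinearIndependent ℝ v := by
    have h1 := (Polynomial.basisMonomials ℝ).linearIndependent
    have h2 := h1.map' J (LinearMap.ker_eq_bot.2 hJ)
    have h3 : v = ⇑J ∘ ⇑(basisMonomials ℝ) := by ext k; simp [v, X_pow_eq_monomial]
    rw [h3]; exact h2
  let e := InnerProductSpace.gramSchmidtNormed ℝ v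
  have he : Orthonormal ℝ e := InnerProductSpace.gramSchmidtNormed_orthonormal hv
  have hspan : ∀ s : Set ℕ, (Submodule.span ℝ ((fun k => (X : ℝ[X]) ^ k) '' s)).map J = Submodule.span ℝ (v '' s) := by
    intro s
    rw [Submodule.map_span, ← Set.image_comp]; rfl
  have hmem : ∀ n, ∃ p ∈ Submodule.span ℝ ((fun k => (X : ℝ[X]) ^ k) '' Set.Iic n), J p = e n := by
    intro n
    have : e n ∈ Submodule.span ℝ (v '' Set.Iic n) := by
      rw [← InnerProductSpace.span_gramSchmidt_Iic ℝ v n, ← InnerProductSpace.span_gramSchmidtNormed]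
      exact Submodule.subset_span ⟨n, Set.mem_Iic.2 le_rfl, rfl⟩
    rw [← hspan] at this
    exact this
  choose P hP1 hP2 using hmem
  have hP3 : ∀ s : Set ℕ, (Submodule.span ℝ (P '' s)).map J = Submodule.span ℝ (e '' s) := by
    intro s
    rw [Submodule.map_span, ← Set.image_comp]
    congr 2; ext n; exact hP2 n
  have hIio : ∀ n, Submodule.span ℝ ((fun k => (X : ℝ[X]) ^ k) '' Set.Iio n) ≤ Submodule.span ℝ (P '' Set.Iio n) := by
    intro n
    rw [← Submodule.map_le_map_iff_of_injective hJ, hspan, hP3, InnerProductSpace.span_gramSchmidtNormed,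
      InnerProductSpace.span_gramSchmidt_Iio]
  refine ⟨P, by simpa only [hP2] using he, hP1, hIio, ?_⟩
  rw [eq_top_iff]
  intro p _
  have hp : p ∈ Submodule.span ℝ ((fun k => (X : ℝ[X]) ^ k) '' Set.Iio (p.natDegree + 1)) := by
    rw [p.as_sum_range_C_mul_X_pow]
    refine Submodule.sum_mem _ fun i hi => ?_
    rw [← smul_eq_C_mul]
    refine Submodule.smul_mem _ _ (Submodule.subset_span ⟨i, ?_, rfl⟩)
    have := Finset.mem_range.1 hi
    rw [← p.as_sum_range_C_mul_X_pow]
    exact this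
  exact Submodule.span_mono (Set.image_subset_range _ _) (hIio _ hp)

lemma dX_bound {E : Type*} [NormedAddCommGroup E] [InnerProductSpace ℝ E]
    (J : ℝ[X] →ₗ[ℝ] E) (hJ : Function.Injective J)
    (hsymm : ∀ p q, inner ℝ (J (X * p)) (J q) = inner ℝ (J p) (J (X * q)))
    {A B : ℝ} (hA : 0 ≤ A) (hB : 0 ≤ B) (hev : ∀ p, |p.eval 0| ≤ A * ‖J p‖)
    (hΛ : ∀ p, |inner ℝ (J 1) (J (dX p))| ≤ B * ‖J p‖) (p : ℝ[X]) :
    ‖J (dX p)‖ ≤ 2 * A * B * ‖J p‖ := by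
  obtain ⟨P, hP, hdeg, hle, htop⟩ := ortho_polys J hJ
  let Λ : ℝ[X] →ₗ[ℝ] ℝ := (innerₛₗ ℝ (J 1)) ∘ₗ J ∘ₗ dX
  have hΛdef : ∀ p, Λ p = inner ℝ (J 1) (J (dX p)) := fun p => rfl
  have hlow : ∀ n, ∀ w ∈ Submodule.span ℝ (P '' Set.Iio n), inner ℝ (J w) (J (P n)) = 0 := by
    intro n w hw
    induction hw using Submodule.span_induction with
    | mem x h =>
      obtain ⟨k, hk, rfl⟩ := h
      exact hP.2 (ne_of_lt hk)
    | zero => simp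
    | add x y _ _ hx hy => rw [map_add, inner_add_left, hx, hy, add_zero]
    | smul a x _ hx => rw [map_smul, inner_smul_left, hx, mul_zero]
  have hC : ∀ c : ℝ, J (C c) = c • J 1 := by
    intro c; rw [← map_smul, smul_eq_C_mul, mul_one]
  refine tri_bound J dX P hP (leval 0) Λ hA hB hev hΛ (fun n => hle n (dX_span n _ (hdeg n))) ?_ p
    (by rw [htop]; trivial)
  intro n k hk
  have h0 : inner ℝ (J (dX (P k))) (J (P n)) = 0 := by
    refine hlow n _ (Submodule.span_mono (Set.image_mono ?_) (hle k (dX_span k _ (hdeg k))))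
    exact fun j hj => lt_trans hj hk
  have h1 : inner ℝ (J (P k)) (J (dX (P n))) =
      inner ℝ (J (X * dX (P k))) (J (dX (P n))) + (P k).eval 0 * Λ (P n) := by
    conv_lhs => rw [dX_eq (P k), map_add, inner_add_left, hC, inner_smul_left]
    rfl
  have h2 : J (X * dX (P n)) = J (P n) - (P n).eval 0 • J 1 := by
    rw [← hC, ← map_sub]; congr 1
    rw [eq_sub_iff_add_eq]; exact (dX_eq (P n)).symm
  rw [h1, hsymm, h2, inner_sub_right, h0, inner_smul_right, real_inner_comm (J 1), ← hΛdef]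
  simp only [leval_apply]
  ring

lemma inner_toLp {μ : Measure ℝ} {f g : ℝ → ℝ} (hf : MemLp f 2 μ) (hg : MemLp g 2 μ) :
    inner ℝ (hf.toLp f) (hg.toLp g) = ∫ x, f x * g x ∂μ := by
  rw [L2.inner_def]
  refine integral_congr_ae ?_
  filter_upwards [hf.coeFn_toLp, hg.coeFn_toLp] with x h1 h2
  rw [h1, h2]; simp [mul_comm]

def J0 {μ : Measure ℝ} (hmom : HasAllMoments μ) : ℝ[X] →ₗ[ℝ] Lp ℝ 2 μ where
  toFun p := (poly_memLp hmom p).toLp _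
  map_add' p q := by
    rw [← MemLp.toLp_add]
    exact MemLp.toLp_congr _ _ (ae_of_all _ fun x => by simp)
  map_smul' c p := by
    rw [RingHom.id_apply, ← MemLp.toLp_const_smul]
    exact MemLp.toLp_congr _ _ (ae_of_all _ fun x => by simp)

lemma J0_inner {μ : Measure ℝ} (hmom : HasAllMoments μ) (p : ℝ[X]) {f : ℝ → ℝ} (hf : MemLp f 2 μ) :
    inner ℝ (J0 hmom p) (hf.toLp f) = ∫ x, p.eval x * f x ∂μ :=
  inner_toLp (poly_memLp hmom p) hf

lemma J0_inner' {μ : Measure ℝ} (hmom : HasAllMoments μ) (p q : ℝ[X]) :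
    inner ℝ (J0 hmom p) (J0 hmom q) = ∫ x, p.eval x * q.eval x ∂μ :=
  inner_toLp (poly_memLp hmom p) (poly_memLp hmom q)

lemma J0_inj {μ : Measure ℝ} (hmom : HasAllMoments μ) (hinf : (mSupp μ).Infinite) :
    Function.Injective (J0 hmom) := by
  rw [injective_iff_map_eq_zero]
  intro p hp
  by_contra hne
  have h1 : (fun x => p.eval x) =ᵐ[μ] 0 := by
    have := (poly_memLp hmom p).coeFn_toLp
    have h2 : (poly_memLp hmom p).toLp _ = 0 := hp
    rw [h2] at this
    exact this.symm.trans (Lp.coeFn_zero _ _ _)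
  refine hinf ((p.rootSet_finite ℝ).subset ?_)
  intro x hx
  rw [mem_rootSet]
  refine ⟨hne, ?_⟩
  by_contra hx0
  have : ({y | p.eval y ≠ 0} : Set ℝ) ∈ nhds x := by
    apply (isOpen_ne_fun p.continuous continuous_const).mem_nhds
    simpa using hx0
  exact hx _ this h1

/-- there are functions concentrated near zero, orthogonal to `h` -/
lemma exists_near {μ : Measure ℝ} (hmom : HasAllMoments μ)
    (h0 : (0 : ℝ) ∈ mSupp μ) (hmass : μ {0} = 0) {h : ℝ → ℝ} (hh : MemLp h 2 μ) {δ : ℝ} (hδ : 0 < δ) :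
    ∃ f : ℝ → ℝ, MemLp f 2 μ ∧ (∀ x, δ ≤ |x| → f x = 0) ∧ ∫ x, f x * h x ∂μ = 0 ∧ ¬ f =ᵐ[μ] 0 := by
  have : IsFiniteMeasure μ := by
    have := hmom 0
    simp at this
    exact (integrable_const_iff_isFiniteMeasure one_ne_zero).1 this
  have hpos : ∀ r > 0, μ (Metric.ball 0 r) ≠ 0 := fun r hr => h0 _ (Metric.ball_mem_nhds _ hr)
  obtain ⟨j, hj⟩ : ∃ j : ℕ, μ (Metric.ball 0 δ \ Metric.ball 0 (δ / (j + 1))) ≠ 0 := by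
    by_contra hcon
    push Not at hcon
    have h1 := measure_iUnion_null hcon
    apply hpos δ hδ
    refine measure_mono_null ?_ (measure_union_null h1 hmass)
    intro x hx
    by_cases hx0 : x = 0
    · right; exact hx0
    · left
      obtain ⟨j, hj⟩ := exists_nat_gt (δ / |x|)
      refine Set.mem_iUnion.2 ⟨j, hx, ?_⟩
      have hxp : 0 < |x| := abs_pos.2 hx0
      simp only [Metric.mem_ball, dist_zero_right, Real.norm_eq_abs, not_lt]
      rw [div_le_iff₀ (by positivity)]
      rw [div_lt_iff₀ hxp] at hj
      nlinarith
  set S := Metric.ball (0:ℝ) (δ / (j + 1)) with hS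
  set T := Metric.ball (0:ℝ) δ \ S with hT
  have hSp : μ S ≠ 0 := hpos _ (by positivity)
  have hSm : MeasurableSet S := measurableSet_ball
  have hTm : MeasurableSet T := measurableSet_ball.diff hSm
  have hdisj : ∀ x ∈ T, x ∉ S := fun x hx => hx.2
  have hSδ : ∀ x ∈ S, |x| < δ := by
    intro x hx
    have : |x| < δ / (j+1) := by simpa [hS] using hx
    refine this.trans_le (div_le_self hδ.le (by linarith [Nat.cast_nonneg (α := ℝ) j]))
  have hTδ : ∀ x ∈ T, |x| < δ := by
    intro x hx
    simpa using hx.1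
  have hhi : Integrable h μ := hh.integrable (by norm_num)
  have key : ∀ a b : ℝ, (a ≠ 0 ∨ b ≠ 0) → a * (∫ x in S, h x ∂μ) + b * (∫ x in T, h x ∂μ) = 0 →
      ∃ f : ℝ → ℝ, MemLp f 2 μ ∧ (∀ x, δ ≤ |x| → f x = 0) ∧ ∫ x, f x * h x ∂μ = 0 ∧ ¬ f =ᵐ[μ] 0 := by
    intro a b hab hint
    refine ⟨fun x => S.indicator (fun _ => a) x + T.indicator (fun _ => b) x, ?_, ?_, ?_, ?_⟩
    · exact (memLp_indicator_const 2 hSm a (Or.inr (measure_ne_top _ _))).add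
        (memLp_indicator_const 2 hTm b (Or.inr (measure_ne_top _ _)))
    · intro x hx
      have h1 : x ∉ S := fun h => absurd (hSδ x h) (not_lt.2 hx)
      have h2 : x ∉ T := fun h => absurd (hTδ x h) (not_lt.2 hx)
      simp [h1, h2]
    · rw [← hint, ← integral_indicator hSm, ← integral_indicator hTm, ← integral_const_mul,
        ← integral_const_mul, ← integral_add]
      · refine integral_congr_ae (ae_of_all _ fun x => ?_)
        by_cases h1 : x ∈ S <;> by_cases h2 : x ∈ T <;> simp [h1, h2, add_mul]
      · exact (hhi.indicator hSm).const_mul _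
      · exact (hhi.indicator hTm).const_mul _
    · intro hf
      rcases hab with ha | hb
      · apply hSp
        refine measure_mono_null ?_ hf
        intro x hx
        have : x ∉ T := fun h => hdisj x h hx
        simpa [hx, this] using ha
      · apply hj
        refine measure_mono_null ?_ hf
        intro x hx
        have : x ∉ S := hdisj x hx
        have hx' : x ∈ T := hx
        simpa [hx', this] using hb
  by_cases hz : (∫ x in S, h x ∂μ) = 0
  · exact key 1 0 (by simp) (by simp [hz])
  · exact key (∫ x in T, h x ∂μ) (-∫ x in S, h x ∂μ) (by right; simpa using hz) (by ring)

lemma cplt_dense {μ : Measure ℝ} (hmom : HasAllMoments μ) {n : ℕ} (hc : Cplt μ n) :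
    DenseRange (fun p : ℝ[X] => J0 hmom (X ^ n * p)) := by
  let L : ℝ[X] →ₗ[ℝ] Lp ℝ 2 μ := J0 hmom ∘ₗ LinearMap.mulLeft ℝ (X ^ n)
  have : (LinearMap.range L).topologicalClosure = ⊤ := by
    rw [Submodule.topologicalClosure_eq_top_iff, Submodule.eq_bot_iff]
    intro u hu
    rw [Submodule.mem_orthogonal] at hu
    have hum := Lp.memLp u
    have h1 : ⇑u =ᵐ[μ] 0 := by
      refine hc u hum fun p => ?_
      have h2 := hu (L p) ⟨p, rfl⟩
      rw [← Lp.toLp_coeFn u hum] at h2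
      have h3 := J0_inner hmom (X ^ n * p) hum
      rw [← h3.symm.trans h2]
      simp_rw [mul_comm]
    exact (Lp.eq_zero_iff_ae_eq_zero).2 h1
  have h2 := (Submodule.dense_iff_topologicalClosure_eq_top).2 this
  exact h2

lemma cplt_step {μ : Measure ℝ} (hmom : HasAllMoments μ) (hinf : (mSupp μ).Infinite)
    (h0 : (0 : ℝ) ∈ mSupp μ) (hmass : μ {0} = 0) {m : ℕ} (hc : Cplt μ (m + 1)) : Cplt μ (m + 2) := by
  intro h hh horth
  set H : Lp ℝ 2 μ := hh.toLp h with hH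
  let J : ℝ[X] →ₗ[ℝ] Lp ℝ 2 μ := J0 hmom ∘ₗ LinearMap.mulLeft ℝ (X ^ (m + 1))
  have hJ : ∀ p, J p = J0 hmom (X ^ (m + 1) * p) := fun p => rfl
  have hJC : ∀ c : ℝ, J (C c) = c • J 1 := by
    intro c; rw [← map_smul, smul_eq_C_mul, mul_one]
  have hXH : ∀ p, inner ℝ (J (X * p)) H = 0 := by
    intro p
    rw [hJ, J0_inner, ← horth p]
    refine integral_congr_ae (ae_of_all _ fun x => ?_)
    simp; ring
  set c := inner ℝ (J 1) H with hcdef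
  have hpH : ∀ p, inner ℝ (J p) H = p.eval 0 * c := by
    intro p
    conv_lhs => rw [dX_eq p, map_add, inner_add_left, hXH, hJC, inner_smul_left]
    simp [hcdef]
  by_cases hc0 : c = 0
  · refine hc h hh fun p => ?_
    have h1 := hpH p
    rw [hc0, mul_zero, hJ, J0_inner] at h1
    rw [← h1]; simp_rw [mul_comm]
  exfalso
  have hJinj : Function.Injective J := by
    intro p q hpq
    have := J0_inj hmom hinf hpq
    exact mul_left_cancel₀ (pow_ne_zero _ X_ne_zero) this
  set A := ‖H‖ / |c| with hA
  have hA0 : 0 ≤ A := by positivity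
  have hev : ∀ p : ℝ[X], |p.eval 0| ≤ A * ‖J p‖ := by
    intro p
    have h1 := abs_real_inner_le_norm (J p) H
    rw [hpH, abs_mul] at h1
    rw [hA, div_mul_eq_mul_div, le_div_iff₀ (abs_pos.2 hc0), mul_comm ‖H‖]
    exact h1
  have hdXJ : ∀ p, J (X * dX p) = J p - p.eval 0 • J 1 := by
    intro p
    rw [← hJC, ← map_sub]; congr 1
    rw [eq_sub_iff_add_eq]; exact (dX_eq p).symm
  set B := ‖J0 hmom (X ^ m)‖ * (1 + A * ‖J 1‖) with hB
  have hB0 : 0 ≤ B := by positivity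
  have hdXn : ∀ p, ‖J (X * dX p)‖ ≤ (1 + A * ‖J 1‖) * ‖J p‖ := by
    intro p
    rw [hdXJ]
    calc _ ≤ ‖J p‖ + ‖p.eval 0 • J 1‖ := norm_sub_le _ _
      _ = ‖J p‖ + |p.eval 0| * ‖J 1‖ := by rw [norm_smul, Real.norm_eq_abs]
      _ ≤ ‖J p‖ + (A * ‖J p‖) * ‖J 1‖ := by gcongr; exact hev p
      _ = _ := by ring
  have hΛ : ∀ p, |inner ℝ (J 1) (J (dX p))| ≤ B * ‖J p‖ := by
    intro p
    have h1 : inner ℝ (J 1) (J (dX p)) = inner ℝ (J0 hmom (X ^ m)) (J (X * dX p)) := by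
      rw [hJ, hJ, hJ, J0_inner', J0_inner']
      refine integral_congr_ae (ae_of_all _ fun x => ?_)
      simp; ring
    rw [h1]
    calc _ ≤ ‖J0 hmom (X ^ m)‖ * ‖J (X * dX p)‖ := abs_real_inner_le_norm _ _
      _ ≤ ‖J0 hmom (X ^ m)‖ * ((1 + A * ‖J 1‖) * ‖J p‖) := by gcongr; exact hdXn p
      _ = _ := by ring
  have hsymm : ∀ p q, inner ℝ (J (X * p)) (J q) = inner ℝ (J p) (J (X * q)) := by
    intro p q
    rw [hJ, hJ, hJ, hJ, J0_inner', J0_inner']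
    refine integral_congr_ae (ae_of_all _ fun x => ?_)
    simp; ring
  set K := 2 * A * B with hK
  have hK0 : 0 ≤ K := by positivity
  have hbound : ∀ p, ‖J (dX p)‖ ≤ K * ‖J p‖ := dX_bound J hJinj hsymm hA0 hB0 hev hΛ
  obtain ⟨f, hf, hfs, hfh, hfne⟩ := exists_near hmom h0 hmass hh (δ := 1 / (K + 1)) (by positivity)
  have hxb : ∀ x, ‖x * f x‖ ≤ 1 / (K + 1) * ‖f x‖ := by
    intro x
    rw [norm_mul]
    by_cases hx : 1 / (K + 1) ≤ |x|
    · rw [hfs x hx]; simp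
    · gcongr; exact (not_le.1 hx).le
  have hxf : MemLp (fun x => x * f x) 2 μ :=
    MemLp.of_le_mul hf (aestronglyMeasurable_id.mul hf.1) (ae_of_all _ hxb)
  set F := hf.toLp f with hF
  set G := hxf.toLp _ with hG
  have hFG : ‖G‖ ≤ 1 / (K + 1) * ‖F‖ := by
    refine Lp.norm_le_mul_norm_of_ae_le_mul ?_
    filter_upwards [hf.coeFn_toLp, hxf.coeFn_toLp] with x h1 h2
    rw [h1, h2]; exact hxb x
  have hFH : inner ℝ F H = 0 := by rw [hF, hH, inner_toLp]; exact hfh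
  have hmain : ∀ p, |inner ℝ (J p) F - c⁻¹ * inner ℝ (J p) H * inner ℝ (J 1) F| ≤ K * ‖J p‖ * ‖G‖ := by
    intro p
    have h1 : inner ℝ (J p) F - c⁻¹ * inner ℝ (J p) H * inner ℝ (J 1) F = inner ℝ (J (dX p)) G := by
      have h2 : inner ℝ (J (X * dX p)) F = inner ℝ (J (dX p)) G := by
        rw [hJ, hJ, hF, hG, J0_inner, J0_inner]
        refine integral_congr_ae (ae_of_all _ fun x => ?_)
        simp; ring
      rw [← h2, hdXJ, inner_sub_left, inner_smul_left, hpH]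
      simp only [conj_trivial]
      field_simp
    rw [h1]
    calc _ ≤ ‖J (dX p)‖ * ‖G‖ := abs_real_inner_le_norm _ _
      _ ≤ _ := by gcongr; exact hbound p
  have hall : ∀ u : Lp ℝ 2 μ, |inner ℝ u F - c⁻¹ * inner ℝ u H * inner ℝ (J 1) F| ≤ K * ‖u‖ * ‖G‖ := by
    intro u
    refine (cplt_dense hmom hc).induction_on u ?_ hmain
    apply isClosed_le <;> fun_prop
  have h1 := hall F
  rw [hFH, real_inner_self_eq_norm_sq] at h1
  simp only [mul_zero, zero_mul, sub_zero] at h1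
  rw [abs_of_nonneg (sq_nonneg _)] at h1
  have hFpos : 0 < ‖F‖ := by
    rw [norm_pos_iff]
    intro hF0
    apply hfne
    exact hf.coeFn_toLp.symm.trans ((Lp.eq_zero_iff_ae_eq_zero).1 hF0)
  have h2 : ‖F‖ ^ 2 ≤ K * ‖F‖ * (1 / (K + 1) * ‖F‖) := h1.trans (by gcongr)
  have h3 : K * ‖F‖ * (1 / (K + 1) * ‖F‖) = K / (K + 1) * ‖F‖ ^ 2 := by ring
  rw [h3] at h2
  have h4 : K / (K + 1) < 1 := by rw [div_lt_one (by positivity)]; linarith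
  have h5 : 0 < ‖F‖ ^ 2 := by positivity
  nlinarith

lemma cplt_all {μ : Measure ℝ} (hmom : HasAllMoments μ) (hinf : (mSupp μ).Infinite)
    (hdet : IsDeterminate μ) (h0 : (0 : ℝ) ∈ mSupp μ) (hmass : μ {0} = 0) : ∀ n, Cplt μ n
  | 0 => cplt_zero hmom hdet
  | 1 => cplt_one hmom hdet hmass
  | (m + 2) => cplt_step hmom hinf h0 hmass (cplt_all hmom hinf hdet h0 hmass (m + 1))

theorem stmt0 (μ : Measure ℝ) (hmom : HasAllMoments μ) (hinf : (mSupp μ).Infinite)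
    (hdet : IsDeterminate μ) (hsupp : mSupp μ ⊆ Set.Ici (0 : ℝ))
    (h0 : (0 : ℝ) ∈ mSupp μ) (hmass : μ {0} = 0) (n : ℕ) :
    Dense {f : Lp ℂ 2 μ | ∃ p : Polynomial ℂ,
      (∀ j : ℕ, j < n → p.coeff j = 0) ∧
      ⇑f =ᵐ[μ] fun x : ℝ => p.eval (x : ℂ)} := by
  have hc := cplt_all hmom hinf hdet h0 hmass n
  let W : Submodule ℂ (Lp ℂ 2 μ) :=
    { carrier := {f : Lp ℂ 2 μ | ∃ p : Polynomial ℂ,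
        (∀ j : ℕ, j < n → p.coeff j = 0) ∧
        ⇑f =ᵐ[μ] fun x : ℝ => p.eval (x : ℂ)}
      zero_mem' := ⟨0, by simp, (Lp.coeFn_zero _ _ _).trans (ae_of_all _ fun x => by simp)⟩
      add_mem' := by
        rintro f g ⟨p, hp, hfp⟩ ⟨q, hq, hgq⟩
        refine ⟨p + q, fun j hj => by simp [hp j hj, hq j hj], ?_⟩
        filter_upwards [Lp.coeFn_add f g, hfp, hgq] with x h1 h2 h3
        rw [h1, Pi.add_apply, h2, h3, eval_add]
      smul_mem' := by
        rintro a f ⟨p, hp, hfp⟩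
        refine ⟨a • p, fun j hj => by simp [hp j hj], ?_⟩
        filter_upwards [Lp.coeFn_smul a f, hfp] with x h1 h2
        rw [h1, Pi.smul_apply, h2, eval_smul] }
  have hW : W.topologicalClosure = ⊤ := by
    rw [Submodule.topologicalClosure_eq_top_iff, Submodule.eq_bot_iff]
    intro u hu
    rw [Submodule.mem_orthogonal] at hu
    have hum := Lp.memLp u
    have hz : ∀ p : ℝ[X], ∫ x, (((X ^ n * p).eval x : ℝ) : ℂ) * u x ∂μ = 0 := by
      intro p
      set q : ℂ[X] := (X ^ n * p).map Complex.ofRealHom with hq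
      have hqe : ∀ x : ℝ, q.eval (x : ℂ) = (((X ^ n * p).eval x : ℝ) : ℂ) := by
        intro x
        have := eval_map_apply (f := Complex.ofRealHom) (p := X ^ n * p) x
        simpa [hq] using this
      have h1 := hu ((cpoly_memLp hmom q).toLp _) ⟨q, by
        intro j hj
        rw [hq, coeff_map, coeff_X_pow_mul', if_neg (by omega), map_zero], MemLp.coeFn_toLp _⟩
      rw [L2.inner_def] at h1
      rw [← h1]
      refine integral_congr_ae ?_
      filter_upwards [(cpoly_memLp hmom q).coeFn_toLp] with x hx
      rw [hx, hqe]
      simp [mul_comm]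
    have hint : ∀ p : ℝ[X], Integrable (fun x => (((X ^ n * p).eval x : ℝ) : ℂ) * u x) μ := by
      intro p
      exact int_mul ((poly_memLp hmom (X ^ n * p)).ofReal) hum
    have hre : (fun x => (u x).re) =ᵐ[μ] 0 := by
      refine hc _ hum.re fun p => ?_
      have h1 := integral_re (hint p)
      rw [hz p] at h1
      simp only [map_zero] at h1
      rw [← h1]
      refine integral_congr_ae (ae_of_all _ fun x => ?_)
      exact (mul_comm _ _).trans (Complex.re_ofReal_mul _ _).symm
    have him : (fun x => (u x).im) =ᵐ[μ] 0 := by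
      refine hc _ hum.im fun p => ?_
      have h1 := integral_im (hint p)
      rw [hz p] at h1
      simp only [map_zero] at h1
      rw [← h1]
      refine integral_congr_ae (ae_of_all _ fun x => ?_)
      exact (mul_comm _ _).trans (Complex.im_ofReal_mul _ _).symm
    refine (Lp.eq_zero_iff_ae_eq_zero).2 ?_
    filter_upwards [hre, him] with x h1 h2
    exact Complex.ext h1 h2
  exact (Submodule.dense_iff_topologicalClosure_eq_top).2 hW
end
end

section
/- Let μ be a determinate measure on ℝ with all moments finite and infinite support, such that supp(μ) ⊆ [0,∞) and 0 ∈ supp(μ) is not an isolated point of supp(μ). Let (p_n) be the orthonormal polynomials of μ, and write p_n(x) = γ_{n,n}x^n + γ_{n,n-1}x^{n-1} + ⋯ + γ_{n,1}x + γ_{n,0}. Then for every fixed k ∈ ℕ₀, the coefficients γ_{n,k+1} are nonzero for n ≥ k+1 and lim_{n→∞} |γ_{n,k}/γ_{n,k+1}| = 0. -/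
open MeasureTheory Polynomial Filter

noncomputable section

/-- The complex polynomial functions are dense in `L²(ν)`. -/
def PolyDense (ν : Measure ℝ) : Prop :=
  Dense {f : Lp ℂ 2 ν | ∃ p : Polynomial ℂ, ⇑f =ᵐ[ν] fun x : ℝ => p.eval (x : ℂ)}


theorem xs_integrable {μ : Measure ℝ} (hmom : HasAllMoments μ) (f : ℝ[X]) :
    Integrable (fun x => f.eval x) μ := by
  simp only [Polynomial.eval_eq_sum_range]
  refine integrable_finsetSum _ fun i _ => ?_
  refine Integrable.const_mul ?_ _
  refine (hmom i).mono (by fun_prop) (ae_of_all _ fun x => ?_)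
  simp

def xsL {μ : Measure ℝ} (hmom : HasAllMoments μ) : ℝ[X] →ₗ[ℝ] ℝ where
  toFun f := ∫ x, f.eval x ∂μ
  map_add' f g := by
    simp only [eval_add]
    exact integral_add (xs_integrable hmom f) (xs_integrable hmom g)
  map_smul' c f := by
    simp [integral_const_mul]

theorem xsL_apply {μ : Measure ℝ} (hmom : HasAllMoments μ) (f : ℝ[X]) :
    xsL hmom f = ∫ x, f.eval x ∂μ := rfl

theorem xs_pos {μ : Measure ℝ} (hmom : HasAllMoments μ) (hinf : (mSupp μ).Infinite)
    (f : ℝ[X]) (hf : f ≠ 0) (h : ∀ᵐ x ∂μ, 0 ≤ f.eval x) : 0 < xsL hmom f := by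
  rw [xsL_apply]
  refine lt_of_le_of_ne (integral_nonneg_of_ae h) fun h0 => ?_
  have h1 := (integral_eq_zero_iff_of_nonneg_ae h (xs_integrable hmom f)).1 h0.symm
  apply hinf
  refine (f.roots.toFinset.finite_toSet).subset fun x hx => ?_
  by_contra hne
  have hfx : f.eval x ≠ 0 := by
    intro h2; apply hne; simp [hf, h2]
  have hU : {y | f.eval y ≠ 0} ∈ nhds x :=
    (f.continuous.continuousAt).eventually_ne hfx
  exact hx _ hU (by simpa [Filter.EventuallyEq, ae_iff] using h1)

theorem xs_ae {μ : Measure ℝ} (hsupp : mSupp μ ⊆ Set.Ici (0 : ℝ)) : ∀ᵐ x ∂μ, 0 ≤ x := by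
  rw [ae_iff]
  refine measure_null_of_locally_null _ fun x hx => ?_
  have hx' : x ∉ mSupp μ := fun h => hx (hsupp h)
  simp only [mSupp, Set.mem_ofPred_eq, not_forall, not_not] at hx'
  obtain ⟨U, hU, h0⟩ := hx'
  exact ⟨U, mem_nhdsWithin_of_mem_nhds hU, h0⟩

theorem xs_orth {μ : Measure ℝ} (hmom : HasAllMoments μ) (p : ℕ → Polynomial ℝ)
    (hdeg : ∀ n : ℕ, (p n).degree = n)
    (horth : ∀ n m : ℕ,
      ∫ x, (p n).eval x * (p m).eval x ∂μ = if n = m then 1 else 0)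
    (n : ℕ) (q : ℝ[X]) (hq : q.degree < n) : xsL hmom (p n * q) = 0 := by
  suffices H : ∀ d ≤ n, ∀ q : ℝ[X], q.degree < d → xsL hmom (p n * q) = 0 from H n le_rfl q hq
  intro d
  induction d with
  | zero =>
    intro _ q hq
    have : q = 0 := by
      rw [← Polynomial.degree_eq_bot]; 
      simpa using hq
    simp [this]
  | succ d ih =>
    intro hd q hq
    have hlc : (p d).coeff d ≠ 0 := Polynomial.coeff_ne_zero_of_eq_degree (hdeg d)
    set c := q.coeff d / (p d).coeff d with hc
    have h1 : (q - C c * p d).degree < (d : ℕ) := by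
      rw [Polynomial.degree_lt_iff_coeff_zero]
      intro m hm
      rcases hm.eq_or_lt with rfl | hm
      · simp [hc, hlc]
      · have e1 : q.coeff m = 0 := by
          apply Polynomial.coeff_eq_zero_of_degree_lt
          exact hq.trans_le (by exact_mod_cast hm)
        have e2 : (p d).coeff m = 0 := by
          apply Polynomial.coeff_eq_zero_of_degree_lt
          rw [hdeg]; exact_mod_cast hm
        simp [e1, e2]
    have h2 := ih (by omega) _ h1
    have h3 : xsL hmom (p n * p d) = 0 := by
      have := horth n d
      rw [if_neg (by omega)] at this
      rw [xsL_apply]; simpa using this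
    have : p n * q = p n * (q - C c * p d) + c • (p n * p d) := by
      rw [Polynomial.smul_eq_C_mul]; ring
    rw [this, map_add, map_smul, h2, h3]; simp

theorem xs_roots {μ : Measure ℝ} (hmom : HasAllMoments μ) (hinf : (mSupp μ).Infinite)
    (hsupp : mSupp μ ⊆ Set.Ici (0 : ℝ)) (p : ℕ → Polynomial ℝ)
    (hdeg : ∀ n : ℕ, (p n).degree = n)
    (horth : ∀ n m : ℕ,
      ∫ x, (p n).eval x * (p m).eval x ∂μ = if n = m then 1 else 0) (n : ℕ) :
    ∃ Z : Finset ℝ, Z.card = n ∧ (∀ z ∈ Z, 0 < z) ∧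
      p n = C (p n).leadingCoeff * ∏ z ∈ Z, (X - C z) := by
  have hp0 : p n ≠ 0 := by
    intro h; have := hdeg n; simp [h] at this
  -- key: no factor g of positive degree with p = g * r and g * r^2 of constant sign
  have key : ∀ g r : ℝ[X], p n = g * r → 0 < g.degree →
      ¬ ∃ h : ℝ[X], (∀ᵐ x ∂μ, 0 ≤ h.eval x) ∧ (h = g ∨ h = -g) := by
    rintro g r hgr hg ⟨h, hh, hhg⟩
    have hg0 : g ≠ 0 := by rintro rfl; simp at hg
    have hr0 : r ≠ 0 := by rintro rfl; simp at hgr; exact hp0 hgr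
    have hrd : r.degree < n := by
      have := hdeg n
      rw [hgr, Polynomial.degree_mul, degree_eq_natDegree hg0, degree_eq_natDegree hr0] at this
      rw [degree_eq_natDegree hg0] at hg
      rw [degree_eq_natDegree hr0]
      norm_cast at *
      omega
    have h1 := xs_orth hmom p hdeg horth n r hrd
    have hpos : 0 < xsL hmom (h * r ^ 2) := by
      refine xs_pos hmom hinf _ ?_ ?_
      · refine mul_ne_zero ?_ (pow_ne_zero _ hr0)
        rcases hhg with rfl | rfl
        · exact hg0
        · simpa using hg0
      · filter_upwards [hh] with x hx
        rw [eval_mul, eval_pow]; positivity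
    have e : p n * r = g * r ^ 2 := by rw [hgr]; ring
    rw [e] at h1
    rcases hhg with rfl | rfl
    · exact hpos.ne' h1
    · rw [neg_mul, map_neg, h1] at hpos; simp at hpos
  have hsplit : (p n).Splits := by
    obtain ⟨u, hu⟩ := UniqueFactorizationMonoid.factors_prod hp0
    rw [← hu]
    refine (Splits.multisetProd fun g hg ↦ ?_).mul u.isUnit.splits
    have hirr := UniqueFactorizationMonoid.irreducible_of_factor g hg
    obtain ⟨r, hr⟩ := UniqueFactorizationMonoid.dvd_of_mem_factors hg
    by_contra hns
    have hroot : ∀ x, g.eval x ≠ 0 := by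
      intro x hx
      exact hns (Splits.of_degree_eq_one (degree_eq_one_of_irreducible_of_root hirr hx))
    refine key g r hr (degree_pos_of_irreducible hirr) ?_
    by_cases h0 : 0 < g.eval 0
    · refine ⟨g, ae_of_all _ fun x => ?_, Or.inl rfl⟩
      by_contra hx
      push Not at hx
      obtain ⟨y, hy⟩ := mem_range_of_exists_le_of_exists_ge g.continuous ⟨x, hx.le⟩ ⟨0, h0.le⟩
      exact hroot y hy
    · refine ⟨-g, ae_of_all _ fun x => ?_, Or.inr rfl⟩
      by_contra hx
      push Not at hx h0
      rw [eval_neg] at hx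
      obtain ⟨y, hy⟩ := mem_range_of_exists_le_of_exists_ge g.continuous ⟨0, h0⟩ ⟨x, by linarith⟩
      exact hroot y hy
  have hnodup : (p n).roots.Nodup := by
    rw [Multiset.nodup_iff_count_le_one]
    intro z
    by_contra hc
    push Not at hc
    rw [count_roots] at hc
    have hd : (X - C z) ^ 2 ∣ p n :=
      (pow_dvd_pow _ hc).trans (pow_rootMultiplicity_dvd _ _)
    obtain ⟨r, hr⟩ := hd
    refine key _ r hr ?_ ⟨_, ae_of_all _ fun x => ?_, Or.inl rfl⟩
    · rw [degree_pow, degree_X_sub_C]; norm_num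
    · rw [eval_pow]; positivity
  refine ⟨(p n).roots.toFinset, ?_, ?_, ?_⟩
  · rw [Multiset.toFinset_card_of_nodup hnodup, ← hsplit.natDegree_eq_card_roots]
    exact natDegree_eq_of_degree_eq_some (hdeg n)
  · intro z hz
    by_contra hneg
    push Not at hneg
    have hz' : IsRoot (p n) z := by
      simpa [hp0] using hz
    obtain ⟨r, hr⟩ := dvd_iff_isRoot.2 hz'
    refine key _ r hr (by rw [degree_X_sub_C]; norm_num) ⟨_, ?_, Or.inl rfl⟩
    filter_upwards [xs_ae hsupp] with x hx
    simp; linarith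
  · conv_lhs => rw [hsplit.eq_prod_roots]
    congr 1
    rw [Finset.prod_multiset_map_count]
    refine Finset.prod_congr rfl fun z hz => ?_
    rw [Multiset.count_eq_one_of_mem hnodup (by simpa using hz), pow_one]

theorem xs_gauss {μ : Measure ℝ} (hmom : HasAllMoments μ) 
    (p : ℕ → Polynomial ℝ)
    (hdeg : ∀ n : ℕ, (p n).degree = n)
    (horth : ∀ n m : ℕ,
      ∫ x, (p n).eval x * (p m).eval x ∂μ = if n = m then 1 else 0) (n : ℕ)
    (Z : Finset ℝ) (hZ : Z.card = n)
    (hpZ : p n = C (p n).leadingCoeff * ∏ z ∈ Z, (X - C z)) :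
    ∃ w : ℝ → ℝ, (∀ z ∈ Z, 0 ≤ w z) ∧
      ∀ f : ℝ[X], f.degree < (2 * n : ℕ) → xsL hmom f = ∑ z ∈ Z, w z * f.eval z := by
  have hp0 : p n ≠ 0 := by
    intro h; have := hdeg n; simp [h] at this
  have hinj : Set.InjOn (id : ℝ → ℝ) Z := Function.injective_id.injOn
  have quad : ∀ f : ℝ[X], f.degree < (2 * n : ℕ) →
      xsL hmom f = ∑ z ∈ Z, xsL hmom (Lagrange.basis Z id z) * f.eval z := by
    intro f hf
    have hdm := EuclideanDomain.div_add_mod f (p n)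
    have hr : (f % p n).degree < n := by
      rw [← hdeg n]; exact EuclideanDomain.mod_lt f hp0
    have hq : (f / p n).degree < n := by
      by_cases hlt : f.degree < (p n).degree
      · rw [(Polynomial.div_eq_zero_iff hp0).2 hlt]; simp
      · have := Polynomial.degree_add_div hp0 (not_lt.1 hlt)
        by_cases hq0 : f / p n = 0
        · simp [hq0]
        rw [← this, hdeg, degree_eq_natDegree hq0] at hf
        rw [degree_eq_natDegree hq0]
        norm_cast at *
        omega
    have hev : ∀ z ∈ Z, (f % p n).eval z = f.eval z := by
      intro z hz
      have h0 : (p n).eval z = 0 := by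
        rw [hpZ, eval_mul, eval_prod, Finset.prod_eq_zero hz (by simp), mul_zero]
      conv_rhs => rw [← hdm]
      simp [h0]
    have hL : f % p n = Lagrange.interpolate Z id fun z => f.eval z :=
      Lagrange.eq_interpolate_of_eval_eq _ hinj (by rw [hZ]; exact hr) hev
    conv_lhs => rw [← hdm]
    rw [map_add, xs_orth hmom p hdeg horth n _ hq, zero_add, hL, Lagrange.interpolate_apply,
      map_sum]
    refine Finset.sum_congr rfl fun z _ => ?_
    rw [← smul_eq_C_mul, map_smul, smul_eq_mul, mul_comm]
  refine ⟨fun z => xsL hmom (Lagrange.basis Z id z), fun z hz => ?_, quad⟩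
  have hb : (Lagrange.basis Z id z ^ 2).degree < (2 * n : ℕ) := by
    have hn : 0 < n := hZ ▸ Finset.card_pos.2 ⟨z, hz⟩
    rw [degree_pow, Lagrange.degree_basis hinj hz, hZ, nsmul_eq_mul]
    have : 2 * (n - 1) < 2 * n := by omega
    exact_mod_cast this
  have h1 := quad _ hb
  rw [Finset.sum_eq_single_of_mem z hz] at h1
  · have : eval z (Lagrange.basis Z id z) = 1 := Lagrange.eval_basis_self hinj hz
    rw [eval_pow, this, one_pow, mul_one] at h1
    show 0 ≤ xsL hmom (Lagrange.basis Z id z)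
    rw [← h1, xsL_apply]
    refine integral_nonneg fun x => ?_
    simp only [eval_pow]; positivity
  · intro y hy hyz
    have : eval y (Lagrange.basis Z id z) = 0 :=
      Lagrange.eval_basis_of_ne (v := id) (Ne.symm hyz) hy
    simp [this]

theorem xs_coeff_nonneg (Z : Finset ℝ) (hZ : ∀ z ∈ Z, 0 < z) (j : ℕ) :
    0 ≤ (∏ z ∈ Z, (X + C z) : ℝ[X]).coeff j ∧
    (j ≤ Z.card → 0 < (∏ z ∈ Z, (X + C z) : ℝ[X]).coeff j) := by
  classical
  induction Z using Finset.induction_on generalizing j with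
  | empty =>
    rw [Finset.prod_empty, coeff_one]
    constructor
    · split_ifs <;> norm_num
    · intro h; simp at h; simp [h]
  | insert a s ha ih =>
    have iha := ih (fun z hz => hZ z (Finset.mem_insert_of_mem hz))
    have hapos := hZ a (Finset.mem_insert_self _ _)
    rw [Finset.prod_insert ha, Finset.card_insert_of_notMem ha, add_mul]
    cases j with
    | zero =>
      simp only [coeff_add, coeff_C_mul, mul_coeff_zero, coeff_X_zero, zero_mul, zero_add]
      have h := (iha 0).2 (by omega)
      have h' := mul_pos hapos h
      simp only [coeff_C_zero]
      exact ⟨h'.le, fun _ => h'⟩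
    | succ j =>
      simp only [coeff_add, coeff_X_mul, coeff_C_mul]
      have h1 := mul_nonneg hapos.le (iha (j+1)).1
      have h2 := (iha j).1
      exact ⟨by positivity, fun hj => by have := (iha j).2 (by omega); positivity⟩

theorem xs_coeff_ratio (δ : ℝ) (g : ℝ[X]) (hg : ∀ j, 0 ≤ g.coeff j) (A : Finset ℝ) :
    (∀ z ∈ A, 0 < z ∧ z < δ) → 
    (∀ j, 0 ≤ ((∏ z ∈ A, (X + C z)) * g).coeff j) ∧ 
    ∀ k, A.card = k + 1 → ((∏ z ∈ A, (X + C z)) * g).coeff k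
      ≤ (k + 1) * δ * ((∏ z ∈ A, (X + C z)) * g).coeff (k + 1) := by
  classical
  induction A using Finset.induction_on with
  | empty => simpa using hg
  | insert a s ha ih =>
    intro hZ
    obtain ⟨ih1, ih2⟩ := ih (fun z hz => hZ z (Finset.mem_insert_of_mem hz))
    obtain ⟨ha0, had⟩ := hZ a (Finset.mem_insert_self _ _)
    have hδ : 0 < δ := ha0.trans had
    rw [Finset.prod_insert ha, Finset.card_insert_of_notMem ha, mul_assoc, add_mul]
    set G := (∏ z ∈ s, (X + C z)) * g with hG
    constructor
    · intro j
      cases j with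
      | zero =>
        have := mul_nonneg ha0.le (ih1 0)
        simpa using this
      | succ j =>
        have := mul_nonneg ha0.le (ih1 (j+1))
        have := ih1 j
        simp only [coeff_add, coeff_X_mul, coeff_C_mul]
        positivity
    · intro k hk
      have hk' : s.card = k := by omega
      have h1 := ih1 k
      have h2 := ih1 (k+1)
      have h3 : a * G.coeff k ≤ δ * G.coeff k := by gcongr
      have h4 : 0 ≤ (k+1) * δ * (a * G.coeff (k+1)) := by positivity
      cases k with
      | zero =>
        simp only [coeff_add, coeff_X_mul, coeff_C_mul, coeff_X_mul_zero]
        push_cast at *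
        nlinarith
      | succ k =>
        have h5 := ih2 k hk'
        simp only [coeff_add, coeff_X_mul, coeff_C_mul]
        push_cast at *
        nlinarith

theorem xs_flip (Z : Finset ℝ) (k : ℕ) :
    |(∏ z ∈ Z, (X - C z) : ℝ[X]).coeff k| = |(∏ z ∈ Z, (X + C z) : ℝ[X]).coeff k| := by
  have h : (∏ z ∈ Z, (X - C z) : ℝ[X]).comp (-X) = C ((-1) ^ Z.card) * ∏ z ∈ Z, (X + C z) := by
    rw [Polynomial.prod_comp, C_pow, ← Finset.prod_const, ← Finset.prod_mul_distrib]
    refine Finset.prod_congr rfl fun z _ => ?_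
    simp; ring
  have h2 := congrArg (fun q : ℝ[X] => |q.coeff k|) h
  simp only [coeff_C_mul, abs_mul, abs_pow, abs_neg, abs_one, one_pow, one_mul] at h2
  rw [← h2, show (-X : ℝ[X]) = C (-1) * X by simp, comp_C_mul_X_coeff]
  simp [abs_mul]

open scoped NNReal ENNReal Topology

def xsNu (Z : Finset ℝ) (w : ℝ → ℝ) : Measure ℝ :=
  ∑ z ∈ Z, ENNReal.ofReal (w z) • Measure.dirac z

instance xsNu_fin (Z : Finset ℝ) (w : ℝ → ℝ) : IsFiniteMeasure (xsNu Z w) := by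
  unfold xsNu
  constructor
  simp only [Measure.coe_finsetSum, Finset.sum_apply]
  refine ENNReal.sum_lt_top.2 fun z _ => ?_
  simp

theorem xsNu_integral (Z : Finset ℝ) (w : ℝ → ℝ) (hw : ∀ z ∈ Z, 0 ≤ w z) (f : ℝ → ℝ) :
    ∫ x, f x ∂(xsNu Z w) = ∑ z ∈ Z, w z * f z := by
  unfold xsNu
  rw [integral_finsetSum_measure]
  · refine Finset.sum_congr rfl fun z hz => ?_
    rw [integral_smul_measure, integral_dirac, ENNReal.toReal_ofReal (hw z hz), smul_eq_mul]
  · intro z _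
    refine Integrable.smul_measure ?_ (by simp)
    exact integrable_dirac (by simp)

theorem xsNu_real (Z : Finset ℝ) (w : ℝ → ℝ) (hw : ∀ z ∈ Z, 0 ≤ w z) (s : Set ℝ)
    (hs : MeasurableSet s) :
    (xsNu Z w).real s = ∑ z ∈ Z, w z * s.indicator 1 z := by
  rw [← xsNu_integral Z w hw, integral_indicator_one hs]

def xsClip (j m : ℕ) : BoundedContinuousFunction ℝ ℝ :=
  BoundedContinuousFunction.ofNormedAddCommGroup (fun x => (max 0 (min x (j + 1))) ^ m)
    (by fun_prop) ((j + 1) ^ m) (by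
      intro x
      rw [norm_pow, Real.norm_of_nonneg (le_max_left _ _)]
      gcongr
      exact max_le (by positivity) (min_le_right _ _))

theorem xsClip_apply (j m : ℕ) (x : ℝ) : xsClip j m x = (max 0 (min x (j + 1))) ^ m := rfl

theorem xsClip_le (j m : ℕ) (x : ℝ) (hx : 0 ≤ x) : xsClip j m x ≤ x ^ m := by
  rw [xsClip_apply]
  gcongr
  exact max_le hx (min_le_left _ _)

theorem xsClip_ge (j m : ℕ) (x : ℝ) (hx : 0 ≤ x) :
    x ^ m - x ^ (m + 1) / (j + 1) ≤ xsClip j m x := by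
  rw [xsClip_apply]
  rcases le_total x (j + 1) with h | h
  · rw [min_eq_left h, max_eq_right hx]
    have : 0 ≤ x ^ (m + 1) / (j + 1) := by positivity
    linarith
  · have h1 : x ^ m ≤ x ^ (m + 1) / (j + 1) := by
      rw [le_div_iff₀ (by positivity), pow_succ]
      gcongr
    have h2 : 0 ≤ (max 0 (min x ((j:ℝ) + 1))) ^ m := by positivity
    linarith

theorem xs_moment (ν : Measure ℝ) [IsFiniteMeasure ν] (hν : ∀ᵐ x ∂ν, 0 ≤ x) (M : ℕ → ℝ)
    (h1 : ∀ j m, ∫ x, xsClip j m x ∂ν ≤ M m)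
    (h2 : ∀ j m, M m - M (m + 1) / (j + 1) ≤ ∫ x, xsClip j m x ∂ν) :
    HasAllMoments ν ∧ ∀ m, ∫ x, x ^ m ∂ν = M m := by
  have key : ∀ m, ∫⁻ x, ENNReal.ofReal (x ^ m) ∂ν = ENNReal.ofReal (M m) := by
    intro m
    have t1 : Tendsto (fun j : ℕ => ∫⁻ x, ENNReal.ofReal (xsClip j m x) ∂ν) atTop
        (𝓝 (∫⁻ x, ENNReal.ofReal (x ^ m) ∂ν)) := by
      refine lintegral_tendsto_of_tendsto_of_monotone ?_ ?_ ?_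
      · intro j
        exact ((xsClip j m).continuous.measurable.ennreal_ofReal).aemeasurable
      · refine ae_of_all _ fun x a b hab => ?_
        refine ENNReal.ofReal_le_ofReal ?_
        rw [xsClip_apply, xsClip_apply]
        gcongr
      · filter_upwards [hν] with x hx
        refine tendsto_const_nhds.congr' ?_
        filter_upwards [eventually_ge_atTop ⌈x⌉₊] with j hj
        have : x ≤ (j:ℝ) + 1 := (Nat.le_ceil x).trans (by
          have : ((⌈x⌉₊ : ℕ) : ℝ) ≤ j := by exact_mod_cast hj
          linarith)
        rw [xsClip_apply, min_eq_left this, max_eq_right hx]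
    have t2 : Tendsto (fun j : ℕ => ∫ x, xsClip j m x ∂ν) atTop (𝓝 (M m)) := by
      refine tendsto_of_tendsto_of_tendsto_of_le_of_le ?_ tendsto_const_nhds
        (fun j => h2 j m) (fun j => h1 j m)
      have := (tendsto_one_div_add_atTop_nhds_zero_nat (𝕜 := ℝ)).const_mul (M (m+1))
      have := this.const_sub (M m)
      simpa [div_eq_mul_inv] using this
    have t3 := (ENNReal.continuous_ofReal.tendsto _).comp t2
    refine tendsto_nhds_unique t1 (t3.congr fun j => ?_)
    refine ofReal_integral_eq_lintegral_ofReal ((xsClip j m).integrable ν) (ae_of_all _ fun x => ?_)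
    rw [xsClip_apply]; positivity
  have hM : ∀ m, 0 ≤ M m := by
    intro m
    refine le_trans (integral_nonneg fun x => ?_) (h1 0 m)
    rw [xsClip_apply]; positivity
  have hnn : ∀ m, 0 ≤ᵐ[ν] fun x : ℝ => x ^ m := by
    intro m
    filter_upwards [hν] with x hx
    exact pow_nonneg hx m
  refine ⟨fun m => ?_, fun m => ?_⟩
  · have : Integrable (fun x : ℝ => x ^ m) ν := by
      refine ⟨by fun_prop, ?_⟩
      rw [hasFiniteIntegral_iff_ofReal (hnn m), key]
      exact ENNReal.ofReal_lt_top
    simpa using this.abs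
  · rw [integral_eq_lintegral_of_nonneg_ae (hnn m) (by fun_prop), key, ENNReal.toReal_ofReal (hM m)]

theorem xs_weak {μ : Measure ℝ} (hdet : IsDeterminate μ) (Z : ℕ → Finset ℝ) (w : ℕ → ℝ → ℝ)
    (hZ : ∀ n, ∀ z ∈ Z n, 0 < z) (hw : ∀ n, ∀ z ∈ Z n, 0 ≤ w n z)
    (hq : ∀ n m, m < 2 * n → ∑ z ∈ Z n, w n z * z ^ m = ∫ x, x ^ m ∂μ)
    (f : BoundedContinuousFunction ℝ ℝ) :
    Tendsto (fun n => ∑ z ∈ Z n, w n z * f z) atTop (𝓝 (∫ x, f x ∂μ)) := by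
  set M : ℕ → ℝ := fun m => ∫ x, x ^ m ∂μ with hM
  have hMnn : ∀ m, 0 ≤ M m := by
    intro m
    have h := hq (m + 1) m (by omega)
    show 0 ≤ ∫ x, x ^ m ∂μ
    rw [← h]
    exact Finset.sum_nonneg fun z hz => mul_nonneg (hw _ z hz) (pow_nonneg (hZ _ z hz).le _)
  let F : ℕ → FiniteMeasure ℝ := fun n => ⟨xsNu (Z n) (w n), inferInstance⟩
  have hFi : ∀ n (g : ℝ → ℝ), ∫ x, g x ∂(F n : Measure ℝ) = ∑ z ∈ Z n, w n z * g z :=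
    fun n g => xsNu_integral _ _ (hw n) g
  refine (Filter.tendsto_iff_ultrafilter _ _ _).2 fun U hU ↦ ?_
  let u : ℕ → ℝ≥0 := fun j => Real.toNNReal (M 1 * (1 / ((j:ℝ) + 1)))
  have hu : Tendsto u atTop (𝓝 0) := by
    have := (tendsto_one_div_add_atTop_nhds_zero_nat (𝕜 := ℝ)).const_mul (M 1)
    have := (continuous_real_toNNReal.tendsto _).comp this
    rw [mul_zero, Real.toNNReal_zero] at this
    exact this
  let K : ℕ → Set ℝ := fun j => Set.Icc 0 ((j:ℝ) + 1)
  have hcomp := isCompact_setOfPred_finiteMeasure_mass_le_compl_isCompact_le (E := ℝ)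
    (u := u) (K := K) (Real.toNNReal (M 0)) hu (fun j => isCompact_Icc) (Or.inl inferInstance)
  have hmem : ∀ᶠ n in atTop, F n ∈
      {ν : FiniteMeasure ℝ | ν.mass ≤ Real.toNNReal (M 0) ∧ ∀ j, ν (K j)ᶜ ≤ u j} := by
    filter_upwards [eventually_ge_atTop 1] with n hn
    constructor
    · rw [← NNReal.coe_le_coe, Real.coe_toNNReal _ (hMnn 0)]
      have : ((F n).mass : ℝ) = (xsNu (Z n) (w n)).real Set.univ := rfl
      rw [this, xsNu_real _ _ (hw n) _ MeasurableSet.univ]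
      have := hq n 0 (by omega)
      simp only [Set.indicator_univ, Pi.one_apply]
      simp only [pow_zero] at this
      rw [this]; simp [hM]
    · intro j
      rw [← NNReal.coe_le_coe, Real.coe_toNNReal _ (mul_nonneg (hMnn 1) (by positivity))]
      have : ((F n (K j)ᶜ : ℝ≥0) : ℝ) = (xsNu (Z n) (w n)).real (K j)ᶜ := rfl
      rw [this, xsNu_real _ _ (hw n) _ measurableSet_Icc.compl]
      have h1 : M 1 = ∑ z ∈ Z n, w n z * z ^ 1 := (hq n 1 (by omega)).symm
      rw [h1, Finset.sum_mul]
      refine Finset.sum_le_sum fun z hz => ?_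
      rw [mul_assoc]
      refine mul_le_mul_of_nonneg_left ?_ (hw n z hz)
      have hz0 := hZ n z hz
      by_cases hzK : z ∈ (K j)ᶜ
      · rw [Set.indicator_of_mem hzK, Pi.one_apply, pow_one, mul_one_div,
          le_div_iff₀ (by positivity), one_mul]
        simp only [K, Set.mem_compl_iff, Set.mem_Icc, not_and, not_le] at hzK
        exact (hzK hz0.le).le
      · rw [Set.indicator_of_notMem hzK]
        positivity
  obtain ⟨ν, hνS, hν⟩ := hcomp.ultrafilter_le_nhds (U.map F) (by
    rw [Filter.le_principal_iff]
    exact hU hmem)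
  have hν' : Tendsto F U (𝓝 ν) := hν
  rw [FiniteMeasure.tendsto_iff_forall_integral_tendsto] at hν'
  simp only [hFi] at hν'
  have hνpos : ∀ᵐ x ∂(ν : Measure ℝ), 0 ≤ x := by
    rw [ae_iff]
    have h0 : ν {a : ℝ | ¬ 0 ≤ a} = 0 := by
      refine le_antisymm (ge_of_tendsto' hu fun j => ?_) zero_le
      refine le_trans (FiniteMeasure.apply_mono _ ?_) (hνS.2 j)
      intro x hx hxK
      exact hx hxK.1
    exact (FiniteMeasure.null_iff_toMeasure_null ν _).1 h0
  have hmo := xs_moment (ν : Measure ℝ) hνpos M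
    (fun j m => by
      refine le_of_tendsto (hν' (xsClip j m)) (hU ?_)
      filter_upwards [eventually_ge_atTop (m + 1)] with n hn
      have h1 : M m = ∑ z ∈ Z n, w n z * z ^ m := (hq n m (by omega)).symm
      rw [h1]
      refine Finset.sum_le_sum fun z hz => ?_
      exact mul_le_mul_of_nonneg_left (xsClip_le _ _ _ (hZ n z hz).le) (hw n z hz))
    (fun j m => by
      refine ge_of_tendsto (hν' (xsClip j m)) (hU ?_)
      filter_upwards [eventually_ge_atTop (m + 1)] with n hn
      have h1 : M m = ∑ z ∈ Z n, w n z * z ^ m := (hq n m (by omega)).symm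
      have h2 : M (m + 1) = ∑ z ∈ Z n, w n z * z ^ (m + 1) := (hq n (m + 1) (by omega)).symm
      rw [h1, h2, Finset.sum_div, ← Finset.sum_sub_distrib]
      refine Finset.sum_le_sum fun z hz => ?_
      rw [mul_div_assoc, ← mul_sub]
      exact mul_le_mul_of_nonneg_left (xsClip_ge _ _ _ (hZ n z hz).le) (hw n z hz))
  have heq : (ν : Measure ℝ) = μ := hdet _ hmo.1 hmo.2
  have := hν' f
  rw [heq] at this
  exact this

theorem xs_near {μ : Measure ℝ} (hmom : HasAllMoments μ)
    (hdet : IsDeterminate μ) (Z : ℕ → Finset ℝ) (w : ℕ → ℝ → ℝ)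
    (hZ : ∀ n, ∀ z ∈ Z n, 0 < z) (hw : ∀ n, ∀ z ∈ Z n, 0 ≤ w n z)
    (hq : ∀ n m, m < 2 * n → ∑ z ∈ Z n, w n z * z ^ m = ∫ x, x ^ m ∂μ)
    (a : ℝ) (ha : a ∈ mSupp μ) (ε : ℝ) (hε : 0 < ε) :
    ∀ᶠ n in atTop, ∃ z ∈ Z n, |z - a| < ε := by
  have hfin : IsFiniteMeasure μ := by
    have := hmom 0
    simp only [pow_zero] at this
    exact (integrable_const_iff_isFiniteMeasure one_ne_zero).1 this
  let f : BoundedContinuousFunction ℝ ℝ :=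
    BoundedContinuousFunction.ofNormedAddCommGroup (fun x => max 0 (ε - |x - a|))
    (by fun_prop) ε (by
      intro x
      rw [Real.norm_of_nonneg (le_max_left _ _)]
      exact max_le hε.le (by linarith [abs_nonneg (x - a)]))
  have hf : ∀ x, f x = max 0 (ε - |x - a|) := fun x => rfl
  have hf0 : ∀ x, 0 ≤ f x := fun x => le_max_left _ _
  have hpos : 0 < ∫ x, f x ∂μ := by
    rw [integral_pos_iff_support_of_nonneg hf0 (f.integrable μ)]
    refine pos_iff_ne_zero.2 (ha _ ?_)
    filter_upwards [Metric.ball_mem_nhds a hε] with x hx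
    rw [Metric.mem_ball, Real.dist_eq] at hx
    rw [Function.mem_support, hf]
    have : 0 < ε - |x - a| := by linarith
    exact (lt_max_of_lt_right this).ne'
  filter_upwards [(xs_weak hdet Z w hZ hw hq f).eventually (lt_mem_nhds hpos)] with n hn
  obtain ⟨z, hz, hzp⟩ := Finset.exists_lt_of_sum_lt (s := Z n) (f := fun _ => (0:ℝ)) (by simpa using hn)
  refine ⟨z, hz, ?_⟩
  by_contra hc
  push Not at hc
  have : f z = 0 := by rw [hf]; exact max_eq_left (by linarith)
  rw [this] at hzp
  simp at hzp

theorem xs_many {μ : Measure ℝ} (hmom : HasAllMoments μ)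
    (hdet : IsDeterminate μ) (hnotisol : (0 : ℝ) ∈ closure (mSupp μ \ {0}))
    (Z : ℕ → Finset ℝ) (w : ℕ → ℝ → ℝ)
    (hZ : ∀ n, ∀ z ∈ Z n, 0 < z) (hw : ∀ n, ∀ z ∈ Z n, 0 ≤ w n z)
    (hq : ∀ n m, m < 2 * n → ∑ z ∈ Z n, w n z * z ^ m = ∫ x, x ^ m ∂μ)
    (hsupp : mSupp μ ⊆ Set.Ici (0 : ℝ))
    (k : ℕ) (δ : ℝ) (hδ : 0 < δ) :
    ∀ᶠ n in atTop, ∃ A ⊆ Z n, A.card = k ∧ ∀ z ∈ A, z < δ := by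
  classical
  induction k generalizing δ with
  | zero => exact Eventually.of_forall fun n => ⟨∅, by simp, by simp, by simp⟩
  | succ k ih =>
    obtain ⟨a, ⟨haS, ha0⟩, had⟩ := Metric.mem_closure_iff.1 hnotisol δ hδ
    have hapos : 0 < a := lt_of_le_of_ne (hsupp haS) (Ne.symm ha0)
    rw [dist_comm, Real.dist_eq, sub_zero, abs_of_pos hapos] at had
    have hε : 0 < min (a / 2) (δ - a) := lt_min (by linarith) (by linarith)
    filter_upwards [ih (a / 2) (by linarith),
      xs_near hmom hdet Z w hZ hw hq a haS _ hε] with n ⟨A, hA, hAc, hAl⟩ ⟨z, hz, hza⟩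
    have h1 := hza.trans_le (min_le_left _ _)
    have h2 := hza.trans_le (min_le_right _ _)
    rw [abs_lt] at h1 h2
    have hzA : z ∉ A := fun h => by linarith [hAl z h]
    refine ⟨insert z A, Finset.insert_subset hz hA, by rw [Finset.card_insert_of_notMem hzA, hAc], ?_⟩
    intro y hy
    rcases Finset.mem_insert.1 hy with rfl | hy
    · linarith
    · linarith [hAl y hy]

theorem stmt4 (μ : Measure ℝ) (hmom : HasAllMoments μ) (hinf : (mSupp μ).Infinite)
    (hdet : IsDeterminate μ) (hsupp : mSupp μ ⊆ Set.Ici (0 : ℝ))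
    (h0 : (0 : ℝ) ∈ mSupp μ) (hnotisol : (0 : ℝ) ∈ closure (mSupp μ \ {0}))
    (p : ℕ → Polynomial ℝ)
    (hdeg : ∀ n : ℕ, (p n).degree = n)
    (hlead : ∀ n : ℕ, 0 < (p n).leadingCoeff)
    (horth : ∀ n m : ℕ,
      ∫ x, (p n).eval x * (p m).eval x ∂μ = if n = m then 1 else 0)
    (k : ℕ) :
    (∀ n : ℕ, k + 1 ≤ n → (p n).coeff (k + 1) ≠ 0) ∧
      Tendsto (fun n : ℕ => |(p n).coeff k / (p n).coeff (k + 1)|) atTop (nhds 0) := by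
  classical
  choose Z hZc hZpos hpZ using fun n => xs_roots hmom hinf hsupp p hdeg horth n
  choose w hw hq using fun n => xs_gauss hmom p hdeg horth n (Z n) (hZc n) (hpZ n)
  have hq' : ∀ n m, m < 2 * n → ∑ z ∈ Z n, w n z * z ^ m = ∫ x, x ^ m ∂μ := by
    intro n m hm
    have := hq n (X ^ m) (by rw [degree_X_pow]; exact_mod_cast hm)
    rw [xsL_apply] at this
    simpa using this.symm
  have hco : ∀ n j, |(p n).coeff j| =
      (p n).leadingCoeff * (∏ z ∈ Z n, (X + C z) : ℝ[X]).coeff j := by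
    intro n j
    conv_lhs => rw [hpZ n]
    rw [coeff_C_mul, abs_mul, xs_flip, abs_of_pos (hlead n),
      abs_of_nonneg (xs_coeff_nonneg _ (hZpos n) j).1]
  have hne : ∀ n : ℕ, k + 1 ≤ n → (p n).coeff (k + 1) ≠ 0 := by
    intro n hn
    rw [← abs_pos, hco]
    exact mul_pos (hlead n) ((xs_coeff_nonneg _ (hZpos n) _).2 (by rw [hZc]; exact hn))
  refine ⟨hne, ?_⟩
  rw [Metric.tendsto_atTop']
  intro ε hε
  have hδ : 0 < ε / (2 * ((k:ℝ) + 1)) := by positivity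
  obtain ⟨N, hN⟩ := eventually_atTop.1 (xs_many hmom hdet hnotisol Z w hZpos hw hq' hsupp (k + 1) _ hδ)
  refine ⟨max N (k + 1), fun n hn => ?_⟩
  obtain ⟨A, hA, hAc, hAl⟩ := hN n ((le_max_left _ _).trans hn.le)
  have hkn : k + 1 ≤ n := (le_max_right _ _).trans hn.le
  rw [Real.dist_eq, sub_zero, abs_abs, abs_div, div_lt_iff₀ (abs_pos.2 (hne n hkn)), hco, hco]
  have hr := (xs_coeff_ratio _ (∏ z ∈ Z n \ A, (X + C z))
    (fun j => (xs_coeff_nonneg _ (fun z hz => hZpos n z (Finset.mem_sdiff.1 hz).1) j).1) A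
    (fun z hz => ⟨hZpos n z (hA hz), hAl z hz⟩)).2 k hAc
  rw [mul_comm (∏ z ∈ A, (X + C z)), Finset.prod_sdiff hA] at hr
  have hc := (xs_coeff_nonneg _ (hZpos n) (k + 1)).2 (by rw [hZc]; exact hkn)
  have he : ((k:ℝ) + 1) * (ε / (2 * ((k:ℝ) + 1))) = ε / 2 := by field_simp
  rw [he] at hr
  have hl := hlead n
  rw [← mul_assoc, mul_comm ε, mul_assoc]
  refine mul_lt_mul_of_pos_left (hr.trans_lt ?_) hl
  exact mul_lt_mul_of_pos_right (by linarith) hc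
end
end
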